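/- Let n ≥ 2 and let V be an irreducible Harish-Chandra 𝔏_{S,n}(B)-module with non-uniformly bounded weight spaces. Then V can be regarded as an irreducible module for 𝔏(B) = (W_n ⋉ A_n) ⊗ B or for W_n ⊗ B; regarded as such, V is a single point evaluation module, and up to a change of variables (twisting by an automorphism Φ_A of 𝔏_{S,n} coming from A ∈ GL_n(ℤ)) V ≅ L_𝔏(K, β, Z) or V ≅ L_{W_n}(K, β, Z) for a highest weight datum (K, β, Z). -/

import Mathlib

open scoped TensorProduct

noncomputable section

namespace LoopWitt

/-- The standard pairing `(u | m)` between `ℂⁿ` and `ℤⁿ`. -/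
def pairC {n : ℕ} (u : Fin n → ℂ) (m : Fin n → ℤ) : ℂ := ∑ i, u i * (m i : ℂ)

/-- The standard pairing on `ℂⁿ`. -/
def pairCC {n : ℕ} (u lam : Fin n → ℂ) : ℂ := ∑ i, u i * lam i

/-- `ℤⁿ = K ⊕ ℤβ`. -/
def IsDirectSumDecomp {n : ℕ} (K : AddSubgroup (Fin n → ℤ)) (β : Fin n → ℤ) : Prop :=
  (∀ m : Fin n → ℤ, ∃ a ∈ K, ∃ d : ℤ, m = a + d • β) ∧ ∀ d : ℤ, d • β ∈ K → d = 0

/-- `r` lies in the positive part `K + ℕ₊ β` of `ℤⁿ`. -/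
def posDeg {n : ℕ} (K : AddSubgroup (Fin n → ℤ)) (β : Fin n → ℤ) (r : Fin n → ℤ) : Prop :=
  ∃ a ∈ K, ∃ d : ℤ, 1 ≤ d ∧ r = a + d • β

/-- A representation of the loop Witt algebra `Wₙ ⊗ B`, given by operators
`D u r b` (for `D(u,r) ⊗ b`, where `D(u,r) = Σ uᵢ tʳ dᵢ`), bilinear in `u` and `b`,
subject to the Witt bracket relations. -/
structure WittRep (n : ℕ) (B : Type*) [CommRing B] [Algebra ℂ B]
    (V : Type*) [AddCommGroup V] [Module ℂ V] where
  D : (Fin n → ℂ) → (Fin n → ℤ) → B → Module.End ℂ V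
  D_add_u : ∀ u u' r b, D (u + u') r b = D u r b + D u' r b
  D_smul_u : ∀ (c : ℂ) u r b, D (c • u) r b = c • D u r b
  D_add_b : ∀ u r b b', D u r (b + b') = D u r b + D u r b'
  D_smul_b : ∀ (c : ℂ) u r b, D u r (c • b) = c • D u r b
  comm_DD : ∀ u r b v s b',
    ⁅D u r b, D v s b'⁆ = D (pairC u s • v - pairC v r • u) (r + s) (b * b')

namespace WittRep

variable {n : ℕ} {B : Type*} [CommRing B] [Algebra ℂ B]
  {V : Type*} [AddCommGroup V] [Module ℂ V]

/-- The weight space of weight `lam` with respect to the Cartan subalgebra `H = ⊕ ℂ dᵢ`. -/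
def weightSpace (ρ : WittRep n B V) (lam : Fin n → ℂ) : Submodule ℂ V where
  carrier := {x | ∀ u, ρ.D u 0 1 x = pairCC u lam • x}
  add_mem' := by
    intro a b ha hb u
    rw [map_add, ha u, hb u, smul_add]
  zero_mem' := by intro u; simp
  smul_mem' := by
    intro c a ha u
    rw [map_smul, ha u, smul_comm]

/-- A weight module: the sum of the weight spaces is everything. -/
def IsWeightModule (ρ : WittRep n B V) : Prop :=
  (⨆ lam : Fin n → ℂ, ρ.weightSpace lam) = ⊤

/-- Uniformly bounded weight spaces. -/
def UniformlyBounded (ρ : WittRep n B V) : Prop :=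
  ∃ N : ℕ, ∀ lam, Module.rank ℂ ↥(ρ.weightSpace lam) ≤ (N : Cardinal)

/-- A Harish-Chandra module: a weight module with finite dimensional weight spaces. -/
def HarishChandra (ρ : WittRep n B V) : Prop :=
  ρ.IsWeightModule ∧ ∀ lam, FiniteDimensional ℂ ↥(ρ.weightSpace lam)

/-- A submodule invariant under all the operators. -/
def Invariant (ρ : WittRep n B V) (U : Submodule ℂ V) : Prop :=
  ∀ u r b, ∀ x ∈ U, ρ.D u r b x ∈ U

/-- Irreducibility. -/
def IsIrreducible (ρ : WittRep n B V) : Prop :=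
  (∃ x : V, x ≠ 0) ∧ ∀ U : Submodule ℂ V, ρ.Invariant U → U = ⊥ ∨ U = ⊤

/-- A single point evaluation module. -/
def IsSinglePointEval (ρ : WittRep n B V) : Prop :=
  ∃ η : B →ₐ[ℂ] ℂ, ∀ u r b, ρ.D u r b = η b • ρ.D u r 1

/-- Nontriviality of the action. -/
def IsNontrivial (ρ : WittRep n B V) : Prop := ∃ u r b x, ρ.D u r b x ≠ 0

/-- `z` is a highest weight vector generating the module, with respect to the
triangular decomposition determined by `ℤⁿ = K ⊕ ℤβ`. -/
def IsHWVector (ρ : WittRep n B V) (K : AddSubgroup (Fin n → ℤ)) (β : Fin n → ℤ)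
    (z : V) : Prop :=
  z ≠ 0 ∧ (∃ lam, z ∈ ρ.weightSpace lam) ∧
  (∀ u r b, posDeg K β r → ρ.D u r b z = 0) ∧
  ∀ U : Submodule ℂ V, ρ.Invariant U → z ∈ U → U = ⊤

/-- A highest weight module. -/
def IsHighestWeight (ρ : WittRep n B V) : Prop :=
  ∃ (K : AddSubgroup (Fin n → ℤ)) (β : Fin n → ℤ),
    IsDirectSumDecomp K β ∧ ∃ z, ρ.IsHWVector K β z

end WittRep

/-- A representation of the loop extended Witt algebra `𝔏_{S,n}(B) = (Wₙ ⋉ (S ⊗ Aₙ)) ⊗ B`,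
given by operators `D u r b` (for `D(u,r) ⊗ b`) and `E s m b` (for `s ⊗ tᵐ ⊗ b`),
suitably multilinear, subject to the bracket relations of `𝔏_{S,n}(B)`. -/
structure ExtWittRep (n : ℕ) (S : Type*) [AddCommGroup S] [Module ℂ S]
    (B : Type*) [CommRing B] [Algebra ℂ B]
    (V : Type*) [AddCommGroup V] [Module ℂ V] where
  D : (Fin n → ℂ) → (Fin n → ℤ) → B → Module.End ℂ V
  E : S → (Fin n → ℤ) → B → Module.End ℂ V
  D_add_u : ∀ u u' r b, D (u + u') r b = D u r b + D u' r b
  D_smul_u : ∀ (c : ℂ) u r b, D (c • u) r b = c • D u r b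
  D_add_b : ∀ u r b b', D u r (b + b') = D u r b + D u r b'
  D_smul_b : ∀ (c : ℂ) u r b, D u r (c • b) = c • D u r b
  E_add_s : ∀ s s' m b, E (s + s') m b = E s m b + E s' m b
  E_smul_s : ∀ (c : ℂ) s m b, E (c • s) m b = c • E s m b
  E_add_b : ∀ s m b b', E s m (b + b') = E s m b + E s m b'
  E_smul_b : ∀ (c : ℂ) s m b, E s m (c • b) = c • E s m b
  comm_DD : ∀ u r b v s b',
    ⁅D u r b, D v s b'⁆ = D (pairC u s • v - pairC v r • u) (r + s) (b * b')
  comm_DE : ∀ u r b s m b', ⁅D u r b, E s m b'⁆ = pairC u m • E s (m + r) (b * b')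
  comm_EE : ∀ s m b s' m' b', ⁅E s m b, E s' m' b'⁆ = 0

namespace ExtWittRep

variable {n : ℕ} {S : Type*} [AddCommGroup S] [Module ℂ S]
  {B : Type*} [CommRing B] [Algebra ℂ B]
  {V : Type*} [AddCommGroup V] [Module ℂ V]

/-- The weight space of the weight given by `lam` on `H` and the linear functional `c`
on `S ≅ S ⊗ t⁰ (⊗ 1)`, with respect to the Cartan subalgebra `H ⊕ (S ⊗ t⁰) (⊗ 1)`. -/
def weightSpace (ρ : ExtWittRep n S B V) (lam : Fin n → ℂ) (c : S →ₗ[ℂ] ℂ) :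
    Submodule ℂ V where
  carrier := {x | (∀ u, ρ.D u 0 1 x = pairCC u lam • x) ∧ ∀ s, ρ.E s 0 1 x = c s • x}
  add_mem' := by
    intro a b ha hb
    refine ⟨fun u => ?_, fun s => ?_⟩
    · rw [map_add, ha.1 u, hb.1 u, smul_add]
    · rw [map_add, ha.2 s, hb.2 s, smul_add]
  zero_mem' := by exact ⟨fun u => by simp, fun s => by simp⟩
  smul_mem' := by
    intro t a ha
    refine ⟨fun u => ?_, fun s => ?_⟩
    · rw [map_smul, ha.1 u, smul_comm]
    · rw [map_smul, ha.2 s, smul_comm]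

/-- A weight module: the weight spaces span. -/
def IsWeightModule (ρ : ExtWittRep n S B V) : Prop :=
  (⨆ p : (Fin n → ℂ) × (S →ₗ[ℂ] ℂ), ρ.weightSpace p.1 p.2) = ⊤

/-- Uniformly bounded weight spaces. -/
def UniformlyBounded (ρ : ExtWittRep n S B V) : Prop :=
  ∃ N : ℕ, ∀ lam c, Module.rank ℂ ↥(ρ.weightSpace lam c) ≤ (N : Cardinal)

/-- Harish-Chandra: a weight module with finite dimensional weight spaces. -/
def HarishChandra (ρ : ExtWittRep n S B V) : Prop :=
  ρ.IsWeightModule ∧ ∀ lam c, FiniteDimensional ℂ ↥(ρ.weightSpace lam c)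

/-- Invariant submodule. -/
def Invariant (ρ : ExtWittRep n S B V) (U : Submodule ℂ V) : Prop :=
  (∀ u r b, ∀ x ∈ U, ρ.D u r b x ∈ U) ∧ (∀ s m b, ∀ x ∈ U, ρ.E s m b x ∈ U)

/-- Irreducibility. -/
def IsIrreducible (ρ : ExtWittRep n S B V) : Prop :=
  (∃ x : V, x ≠ 0) ∧ ∀ U : Submodule ℂ V, ρ.Invariant U → U = ⊥ ∨ U = ⊤

/-- A single point evaluation module. -/
def IsSinglePointEval (ρ : ExtWittRep n S B V) : Prop :=
  ∃ η : B →ₐ[ℂ] ℂ, (∀ u r b, ρ.D u r b = η b • ρ.D u r 1) ∧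
    ∀ s m b, ρ.E s m b = η b • ρ.E s m 1

/-- Single point generalised evaluation module: the action factors through
`𝔤 ⊗ B/𝔪ᵏ` for some maximal ideal `𝔪` and some `k`. -/
def IsGenEval (ρ : ExtWittRep n S B V) : Prop :=
  ∃ 𝔪 : Ideal B, 𝔪.IsMaximal ∧ ∃ k : ℕ, ∀ b ∈ 𝔪 ^ k,
    (∀ u r, ρ.D u r b = 0) ∧ ∀ s m, ρ.E s m b = 0

/-- Nontriviality of the action. -/
def IsNontrivial (ρ : ExtWittRep n S B V) : Prop :=
  (∃ u r b x, ρ.D u r b x ≠ 0) ∨ ∃ s m b x, ρ.E s m b x ≠ 0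

/-- The submodule of vectors on which the whole Lie algebra acts trivially. -/
def trivVectors (ρ : ExtWittRep n S B V) : Submodule ℂ V where
  carrier := {x | (∀ u r b, ρ.D u r b x = 0) ∧ ∀ s m b, ρ.E s m b x = 0}
  add_mem' := by
    intro a b ha hb
    exact ⟨fun u r c => by rw [map_add, ha.1 u r c, hb.1 u r c, add_zero],
      fun s m c => by rw [map_add, ha.2 s m c, hb.2 s m c, add_zero]⟩
  zero_mem' := ⟨fun u r c => by simp, fun s m c => by simp⟩
  smul_mem' := by
    intro t a ha
    exact ⟨fun u r c => by rw [map_smul, ha.1 u r c, smul_zero],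
      fun s m c => by rw [map_smul, ha.2 s m c, smul_zero]⟩

/-- Highest weight vector for the triangular decomposition determined by `ℤⁿ = K ⊕ ℤβ`,
generating the whole module. -/
def IsHWVector (ρ : ExtWittRep n S B V) (K : AddSubgroup (Fin n → ℤ)) (β : Fin n → ℤ)
    (z : V) : Prop :=
  z ≠ 0 ∧ (∃ lam c, z ∈ ρ.weightSpace lam c) ∧
  (∀ u r b, posDeg K β r → ρ.D u r b z = 0) ∧
  (∀ s m b, posDeg K β m → ρ.E s m b z = 0) ∧
  ∀ U : Submodule ℂ V, ρ.Invariant U → z ∈ U → U = ⊤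

/-- Highest weight module. -/
def IsHighestWeight (ρ : ExtWittRep n S B V) : Prop :=
  ∃ (K : AddSubgroup (Fin n → ℤ)) (β : Fin n → ℤ),
    IsDirectSumDecomp K β ∧ ∃ z, ρ.IsHWVector K β z

/-- Invariance under the degree-`K` part `(𝔏_{S,n}(B))_K`. -/
def InvariantK (ρ : ExtWittRep n S B V) (K : AddSubgroup (Fin n → ℤ))
    (U : Submodule ℂ V) : Prop :=
  (∀ u, ∀ r ∈ K, ∀ b, ∀ x ∈ U, ρ.D u r b x ∈ U) ∧
    ∀ s, ∀ m ∈ K, ∀ b, ∀ x ∈ U, ρ.E s m b x ∈ U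

/-- The highest weight space: the `(𝔏_{S,n}(B))_K`-submodule generated by `z`. -/
def hwSpace (ρ : ExtWittRep n S B V) (K : AddSubgroup (Fin n → ℤ)) (z : V) :
    Submodule ℂ V :=
  sInf {U : Submodule ℂ V | z ∈ U ∧ ρ.InvariantK K U}

end ExtWittRep

end LoopWitt

open LoopWitt

open Module

namespace LoopWitt

/-- Vectors separated by a triangular system of test maps are linearly independent. -/
lemma linearIndependent_of_triangular {ι V V' : Type*} [Fintype ι] [LinearOrder ι]
    [AddCommGroup V] [Module ℂ V] [AddCommGroup V'] [Module ℂ V']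
    (y : ι → V) (T : ι → V →ₗ[ℂ] V') (hne : ∀ l, T l (y l) ≠ 0)
    (hlt : ∀ i l, i < l → T l (y i) = 0) : LinearIndependent ℂ y := by
  classical
  rw [Fintype.linearIndependent_iff]
  intro c hc
  by_contra! h
  obtain ⟨i0, hi0⟩ := h
  obtain ⟨l, hl, hmax⟩ := (Finset.univ.filter fun i => c i ≠ 0).exists_maximal ⟨i0, by simpa⟩
  have h1 : T l (∑ i, c i • y i) = c l • T l (y l) := by
    rw [map_sum, Finset.sum_eq_single l]
    · simp
    · intro i _ hil
      rw [map_smul]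
      rcases lt_or_gt_of_ne hil with h | h
      · rw [hlt i l h, smul_zero]
      · by_cases hci : c i = 0
        · rw [hci, zero_smul]
        · exact absurd (hmax (by simpa using hci) h.le) (not_le.2 h)
    · simp
  rw [hc, map_zero] at h1
  rcases smul_eq_zero.1 h1.symm with h | h
  · simp at hl; exact hl h
  · exact hne l h

lemma card_le_finrank_of_triangular {ι V V' : Type*} [Fintype ι] [LinearOrder ι]
    [AddCommGroup V] [Module ℂ V] [AddCommGroup V'] [Module ℂ V']
    (W : Submodule ℂ V) [FiniteDimensional ℂ W]
    (y : ι → V) (hy : ∀ i, y i ∈ W) (T : ι → V →ₗ[ℂ] V') (hne : ∀ l, T l (y l) ≠ 0)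
    (hlt : ∀ i l, i < l → T l (y i) = 0) : Fintype.card ι ≤ finrank ℂ W := by
  have h := linearIndependent_of_triangular y T hne hlt
  have h2 : LinearIndependent ℂ (fun i => (⟨y i, hy i⟩ : W)) :=
    LinearIndependent.of_comp W.subtype (by simpa [Function.comp_def] using h)
  exact h2.fintype_card_le_finrank

/-- A family of maps into small spaces has a common nonzero kernel vector. -/
lemma exists_ne_zero_mem_forall_eq_zero {ι V : Type*} [Fintype ι] [AddCommGroup V] [Module ℂ V]
    (W : Submodule ℂ V) [FiniteDimensional ℂ W]
    (U : ι → Submodule ℂ V) [∀ i, FiniteDimensional ℂ (U i)] (f : ι → V →ₗ[ℂ] V)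
    (hf : ∀ i, ∀ v ∈ W, f i v ∈ U i) (hlt : ∑ i, finrank ℂ (U i) < finrank ℂ W) :
    ∃ v ∈ W, v ≠ 0 ∧ ∀ i, f i v = 0 := by
  let F : W →ₗ[ℂ] (∀ i, U i) := LinearMap.pi fun i => (f i).restrict (hf i)
  have h : LinearMap.ker F ≠ ⊥ := LinearMap.ker_ne_bot_of_finrank_lt (by
    rw [Module.finrank_pi_fintype]; exact hlt)
  obtain ⟨w, hw, hw0⟩ := Submodule.exists_mem_ne_zero_of_ne_bot h
  refine ⟨w, w.2, by simpa using hw0, fun i => ?_⟩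
  have := congrFun (LinearMap.mem_ker.1 hw) i
  simpa [F, Subtype.ext_iff] using this

variable {G P B V : Type*} [AddCommGroup G] [AddCommGroup P] [Module ℂ P]
  [CommRing B] [Algebra ℂ B] [AddCommGroup V] [Module ℂ V]

/-- A representation by operators `X r p b`, graded by `r ∈ G`, of the loop algebra whose
bracket is determined by the pairing `pg` between `G` and the space `P` of parameters. -/
structure LoopAct (pg : G →+ (P →ₗ[ℂ] ℂ)) (B V : Type*) [CommRing B] [Algebra ℂ B]
    [AddCommGroup V] [Module ℂ V] where
  X : G → P →ₗ[ℂ] B →ₗ[ℂ] Module.End ℂ V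
  comm : ∀ r m p q b b' v, X r p b (X m q b' v) =
    X m q b' (X r p b v) + X (r + m) (pg m p • q - pg r q • p) (b * b') v

namespace LoopAct

variable {pg : G →+ (P →ₗ[ℂ] ℂ)} (L : LoopAct pg B V)

/-- Invariant subspaces. -/
def Inv (U : Submodule ℂ V) : Prop := ∀ r p b, ∀ v ∈ U, L.X r p b v ∈ U

/-- The weight space of a character of the parameter space. -/
def Wt (ψ : P →ₗ[ℂ] ℂ) : Submodule ℂ V where
  carrier := {v | ∀ p, L.X 0 p 1 v = ψ p • v}
  add_mem' := by
    intro a b ha hb p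
    rw [map_add, ha p, hb p, smul_add]
  zero_mem' := by intro p; simp
  smul_mem' := by
    intro c a ha p
    rw [map_smul, ha p, smul_comm]

variable {L}

lemma mem_Wt {ψ : P →ₗ[ℂ] ℂ} {v : V} : v ∈ L.Wt ψ ↔ ∀ p, L.X 0 p 1 v = ψ p • v := Iff.rfl

lemma X_mem_Wt {ψ : P →ₗ[ℂ] ℂ} {v : V} (hv : v ∈ L.Wt ψ) (r : G) (p : P) (b : B) :
    L.X r p b v ∈ L.Wt (ψ + pg r) := by
  intro q
  rw [L.comm, hv q]
  simp [add_smul]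

lemma X_mem_Wt' {χ : P →ₗ[ℂ] ℂ} {x : G} {v : V} (hv : v ∈ L.Wt (χ + pg x)) {r : G} (p : P)
    (b : B) {y : G} (h : y = x + r) :
    L.X r p b v ∈ L.Wt (χ + pg y) := by
  have := X_mem_Wt hv r p b
  rwa [h, map_add, ← add_assoc]

variable (L) in
lemma iSupIndep_Wt : iSupIndep L.Wt := by
  have h := Module.End.independent_iInf_maxGenEigenspace_of_forall_mapsTo
    (fun p : P => L.X 0 p 1) (fun i j φ => Module.End.mapsTo_maxGenEigenspace_of_comm (by
      ext v
      have := L.comm 0 0 j i 1 1 v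
      simp at this
      simpa using this) φ)
  have h2 : Function.Injective (fun ψ : P →ₗ[ℂ] ℂ => fun p => ψ p) := fun a b hab =>
    LinearMap.ext fun p => congrFun hab p
  refine (h.comp h2).mono fun ψ => ?_
  refine le_iInf fun p => ?_
  intro v hv
  refine (Module.End.mem_maxGenEigenspace _ _ _).2 ⟨1, ?_⟩
  simp [hv p]

variable (L) in
/-- The standing assumptions: an irreducible module with finite dimensional weight spaces,
with support in a single coset, without trivial vectors. -/
structure Good (χ : P →ₗ[ℂ] ℂ) : Prop where
  inj : ∀ m, m ≠ 0 → ∃ p, pg m p ≠ 0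
  irr : ∀ U : Submodule ℂ V, L.Inv U → U = ⊥ ∨ U = ⊤
  fin : ∀ ψ, FiniteDimensional ℂ (L.Wt ψ)
  span : ⨆ x, L.Wt (χ + pg x) = ⊤
  notriv : ∀ v, (∀ r p b, L.X r p b v = 0) → v = 0
  nontriv : Nontrivial V

variable (L) in
/-- All operators of degree `r` kill `v`. -/
def Kills (r : G) (v : V) : Prop := ∀ p b, L.X r p b v = 0

variable (L) in
/-- All operators of degree `r` with coefficient `1` kill `v`. -/
def KillsOne (r : G) (v : V) : Prop := ∀ p, L.X r p 1 v = 0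

lemma Kills.killsOne {r : G} {v : V} (h : L.Kills r v) : L.KillsOne r v := fun p => h p 1

lemma X_add_eq_zero_of_ne (hinj : ∀ m, m ≠ 0 → ∃ p, pg m p ≠ 0) {r m : G} (hrm : r ≠ m) {b b' : B}
    {v : V} (h1 : ∀ p, L.X r p b v = 0) (h2 : ∀ p, L.X m p b' v = 0) (p : P) :
    L.X (r + m) p (b * b') v = 0 := by
  have key : ∀ p q, L.X (r + m) (pg m p • q - pg r q • p) (b * b') v = 0 := by
    intro p q
    have := L.comm r m p q b b' v
    rw [h1, h2] at this
    simpa using this.symm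
  have diag : ∀ q, pg (m - r) q ≠ 0 → L.X (r + m) q (b * b') v = 0 := by
    intro q hq
    have := key q q
    rw [← sub_smul, map_smul] at this
    rw [map_sub, LinearMap.sub_apply] at hq
    simpa [hq] using this
  by_cases hp : pg (m - r) p = 0
  · obtain ⟨q, hq⟩ := hinj (m - r) (sub_ne_zero.2 hrm.symm)
    have h3 := diag (p + q) (by rw [map_add, hp, zero_add]; exact hq)
    rw [map_add, LinearMap.add_apply, LinearMap.add_apply, diag q hq, add_zero] at h3
    exact h3
  · exact diag p hp

lemma Kills.add (hinj : ∀ m, m ≠ 0 → ∃ p, pg m p ≠ 0) {r m : G} (hrm : r ≠ m)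
    {v : V} (h1 : L.Kills r v) (h2 : L.KillsOne m v) : L.Kills (r + m) v := fun p b => by
  simpa using X_add_eq_zero_of_ne hinj hrm (fun p => h1 p b) (fun p => h2 p) p

lemma KillsOne.add (hinj : ∀ m, m ≠ 0 → ∃ p, pg m p ≠ 0) {r m : G} (hrm : r ≠ m)
    {v : V} (h1 : L.KillsOne r v) (h2 : L.KillsOne m v) : L.KillsOne (r + m) v := fun p => by
  simpa using X_add_eq_zero_of_ne hinj hrm (fun p => h1 p) (fun p => h2 p) p

variable {χ : P →ₗ[ℂ] ℂ}

namespace Good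

lemma smul_eq_zero (hL : L.Good χ) {m : G} {i : ℤ} (h : i • m = 0) : i = 0 ∨ m = 0 := by
  by_cases hm : m = 0
  · exact Or.inr hm
  · obtain ⟨p, hp⟩ := hL.inj m hm
    have : pg (i • m) p = 0 := by rw [h]; simp
    rw [map_zsmul, LinearMap.smul_apply] at this
    simp [hp] at this
    exact Or.inl this

lemma eq_top_of_mem (hL : L.Good χ) {U : Submodule ℂ V} (hU : L.Inv U) {v : V}
    (hv : v ∈ U) (h0 : v ≠ 0) : U = ⊤ := by
  rcases hL.irr U hU with h | h
  · rw [h] at hv; exact absurd (by simpa using hv) h0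
  · exact h

/-- A subspace containing all weight vectors is everything. -/
lemma top_le (hL : L.Good χ) {U : Submodule ℂ V} (h : ∀ x, L.Wt (χ + pg x) ≤ U) : U = ⊤ :=
  top_unique (hL.span ▸ iSup_le h)

end Good

end LoopAct

end LoopWitt

namespace LoopWitt

namespace LoopAct

variable {G P B V : Type*} [AddCommGroup G] [AddCommGroup P] [Module ℂ P]
  [CommRing B] [Algebra ℂ B] [AddCommGroup V] [Module ℂ V]
  {pg : G →+ (P →ₗ[ℂ] ℂ)} {L : LoopAct pg B V} {χ : P →ₗ[ℂ] ℂ}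

variable (L) in
/-- The vectors that are killed by all operators far out in direction `k`. -/
def evSub (k : G) : Submodule ℂ V where
  carrier := {v | ∀ s, ∃ N : ℕ, ∀ j ≥ N, L.Kills (j • k + s) v}
  add_mem' := by
    intro a b ha hb s
    obtain ⟨N, hN⟩ := ha s
    obtain ⟨M, hM⟩ := hb s
    refine ⟨max N M, fun j hj p c => ?_⟩
    rw [map_add, hN j (le_trans (le_max_left _ _) hj), hM j (le_trans (le_max_right _ _) hj),
      add_zero]
  zero_mem' := fun s => ⟨0, fun j _ p c => map_zero _⟩
  smul_mem' := by
    intro c a ha s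
    obtain ⟨N, hN⟩ := ha s
    exact ⟨N, fun j hj p b => by rw [map_smul, hN j hj, smul_zero]⟩

lemma evSub_inv (k : G) : L.Inv (L.evSub k) := by
  intro r p b v hv s
  obtain ⟨N, hN⟩ := hv s
  obtain ⟨M, hM⟩ := hv (s + r)
  refine ⟨max N M, fun j hj q c => ?_⟩
  rw [L.comm, hN j (le_trans (le_max_left _ _) hj), add_assoc,
    hM j (le_trans (le_max_right _ _) hj)]
  simp

variable (L) in
/-- Every vector is eventually killed in direction `k`. -/
def EvKill (k : G) : Prop := ∀ v, v ∈ L.evSub k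

variable (L) in
/-- Some nonzero vector is eventually killed along the multiples of `l`. -/
def Weak (l : G) : Prop := ∃ v : V, v ≠ 0 ∧ ∃ N : ℕ, ∀ j ≥ N, L.KillsOne (j • l) v

namespace Good

lemma evKill_of_mem (hL : L.Good χ) {k : G} {v : V} (h0 : v ≠ 0) (hv : v ∈ L.evSub k) :
    L.EvKill k := by
  intro w
  rw [hL.eq_top_of_mem (evSub_inv k) hv h0]
  trivial

lemma eventually_ne (hL : L.Good χ) {a : G} (ha : a ≠ 0) (s : G) :
    ∃ N : ℕ, ∀ j ≥ N, j • a ≠ s := by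
  by_cases h : ∃ i : ℕ, i • a = s
  · obtain ⟨i, hi⟩ := h
    refine ⟨i + 1, fun j hj hjs => ?_⟩
    have : ((j : ℤ) - i) • a = 0 := by
      rw [sub_smul, natCast_zsmul, natCast_zsmul, hi, hjs, sub_self]
    rcases hL.smul_eq_zero this with h | h
    · omega
    · exact ha h
  · push Not at h
    exact ⟨0, fun j _ => h j⟩

lemma evKill_nsmul (_ : L.Good χ) {k : G} (h : L.EvKill k) {m : ℕ} (hm : 1 ≤ m) :
    L.EvKill (m • k) := by
  intro v s
  obtain ⟨N, hN⟩ := h v s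
  refine ⟨N, fun j hj => ?_⟩
  rw [smul_smul]
  exact hN _ (le_trans hj (Nat.le_mul_of_pos_right j hm))

lemma evKill_of_nsmul (_ : L.Good χ) {k : G} {m : ℕ} (hm : 1 ≤ m) (h : L.EvKill (m • k)) :
    L.EvKill k := by
  intro v s
  choose N hN using fun t : ℕ => h v (t • k + s)
  refine ⟨m * ((Finset.range m).sup N), fun j hj => ?_⟩
  have h1 := hN (j % m) (j / m) ((Finset.le_sup (Finset.mem_range.2 (Nat.mod_lt j hm))).trans
    ((Nat.le_div_iff_mul_le hm).2 (by rw [mul_comm]; exact hj)))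
  rwa [smul_smul, ← add_assoc, ← add_smul, Nat.div_add_mod'] at h1

lemma weak_of_evKill (hL : L.Good χ) {k : G} (h : L.EvKill k) : L.Weak k := by
  obtain ⟨v, hv⟩ := (nontrivial_iff_exists_ne (0 : V)).1 hL.nontriv
  obtain ⟨N, hN⟩ := h v 0
  refine ⟨v, hv, N, fun j hj => ?_⟩
  have := (hN j hj).killsOne
  rwa [add_zero] at this

lemma evKill_add_of_weak (hL : L.Good χ) {k l : G} (hk : L.EvKill k) (hl : L.Weak l) {q : ℕ}
    (hq : 1 ≤ q) : L.EvKill (k + q • l) := by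
  by_cases hkl : k = q • l
  · have := hL.evKill_nsmul hk (m := 2) (by norm_num)
    rwa [← hkl, ← two_nsmul]
  obtain ⟨v, hv, N, hN⟩ := hl
  refine hL.evKill_of_mem hv fun s => ?_
  obtain ⟨M, hM⟩ := hk v s
  obtain ⟨R, hR⟩ := hL.eventually_ne (sub_ne_zero.2 hkl) (-s)
  refine ⟨max N (max M R), fun j hj => ?_⟩
  simp only [ge_iff_le, max_le_iff] at hj
  have h1 := (hM j hj.2.1).add hL.inj (m := (j * q) • l) (fun he => hR j hj.2.2 (by
    rw [smul_sub, smul_smul, ← he]; abel)) (hN _ (hj.1.trans (Nat.le_mul_of_pos_right j hq)))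
  rw [smul_add, smul_smul]
  convert h1 using 1
  abel

lemma evKill_add (hL : L.Good χ) {k l : G} (hk : L.EvKill k) (hl : L.EvKill l) :
    L.EvKill (k + l) := by
  simpa using hL.evKill_add_of_weak hk (hL.weak_of_evKill hl) (q := 1) le_rfl

lemma not_evKill_zero (hL : L.Good χ) : ¬ L.EvKill 0 := by
  intro h
  obtain ⟨v, hv⟩ := (nontrivial_iff_exists_ne (0 : V)).1 hL.nontriv
  refine hv (hL.notriv v fun r p b => ?_)
  obtain ⟨N, hN⟩ := h v r
  simpa using hN N le_rfl p b

lemma not_evKill_neg (hL : L.Good χ) {k : G} (h : L.EvKill k) : ¬ L.EvKill (-k) := fun h' =>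
  hL.not_evKill_zero (by simpa using hL.evKill_add h h')

lemma ne_zero_of_evKill (hL : L.Good χ) {k : G} (h : L.EvKill k) : k ≠ 0 := by
  rintro rfl; exact hL.not_evKill_zero h

lemma not_kills_neg (hL : L.Good χ) (hrk : ∀ k : G, ∃ e, ∀ i : ℤ, e ≠ i • k) {k : G}
    (hk : L.EvKill k) {v : V} (hv : v ≠ 0) : ¬ L.Kills (-k) v := by
  intro hkill
  have h1 : ∀ s : G, (∀ i : ℤ, s ≠ i • k) → L.Kills s v := by
    intro s hs
    obtain ⟨N, hN⟩ := hk v s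
    have : ∀ j : ℕ, L.Kills (j • k + s) v → L.Kills s v := by
      intro j
      induction j with
      | zero => intro h; simpa using h
      | succ j ih =>
        intro h
        refine ih ?_
        have := h.add hL.inj (m := -k) (fun he => hs (-(j + 2 : ℕ)) (by
          rw [← eq_sub_iff_add_eq'] at he
          rw [he]; push_cast; module)) hkill.killsOne
        convert this using 1
        module
    exact this N (hN N le_rfl)
  have hk0 := hL.ne_zero_of_evKill hk
  refine hv (hL.notriv v fun s => ?_)
  change L.Kills s v
  by_cases hs : ∀ i : ℤ, s ≠ i • k
  · exact h1 s hs
  push Not at hs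
  obtain ⟨i, rfl⟩ := hs
  have h2 : ∃ e : G, (∀ i : ℤ, e ≠ i • k) ∧ e ≠ i • k - e := by
    obtain ⟨e, he⟩ := hrk k
    by_cases h : e = i • k - e
    · refine ⟨e + k, fun l hl => he (l - 1) (by rw [sub_smul, ← hl]; simp), fun h' => ?_⟩
      have : (2 : ℤ) • k = 0 := by
        have h3 : e + k - e = i • k - (e + k) - (i • k - e) := by rw [← h', ← h]
        rw [← sub_eq_zero] at h3
        rw [← h3]; module
      rcases hL.smul_eq_zero this with h | h
      · norm_num at h
      · exact hk0 h
    · exact ⟨e, he, h⟩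
  obtain ⟨e, he, hne⟩ := h2
  have := (h1 e he).add hL.inj hne (h1 (i • k - e) fun l hl => he (i - l) (by
    rw [sub_smul, ← hl]; abel)).killsOne
  simpa using this

lemma wt_sub_ne_bot (hL : L.Good χ) (hrk : ∀ k : G, ∃ e, ∀ i : ℤ, e ≠ i • k) {k x : G}
    (hk : L.EvKill k) (hx : L.Wt (χ + pg x) ≠ ⊥) : L.Wt (χ + pg (x - k)) ≠ ⊥ := by
  obtain ⟨v, hv, hv0⟩ := Submodule.exists_mem_ne_zero_of_ne_bot hx
  have := hL.not_kills_neg hrk hk hv0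
  unfold Kills at this
  push Not at this
  obtain ⟨p, b, h⟩ := this
  exact (Submodule.ne_bot_iff _).2 ⟨_, X_mem_Wt' hv p b (sub_eq_add_neg x k), h⟩

lemma eventually_wt_eq_bot (hL : L.Good χ) {k : G} (hk : L.EvKill k) (x : G) :
    ∃ J : ℕ, ∀ j ≥ J, L.Wt (χ + pg (x + j • k)) = ⊥ := by
  by_contra! hcon
  have hk0 := hL.ne_zero_of_evKill hk
  obtain ⟨u, hu⟩ := hL.inj k hk0
  have step : ∀ J : ℕ, ∃ j ≥ J, 1 ≤ j ∧ ∃ w ∈ L.Wt (χ + pg (x + j • k)), w ≠ 0 ∧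
      ∀ i ≥ j, L.Kills (i • k) w := by
    intro J
    obtain ⟨j, hj, hbot⟩ := hcon (max J 1)
    obtain ⟨w, hw, hw0⟩ := Submodule.exists_mem_ne_zero_of_ne_bot hbot
    simp only [ge_iff_le, max_le_iff] at hj
    by_cases hall : ∀ i ≥ j, L.Kills (i • k) w
    · exact ⟨j, hj.1, hj.2, w, hw, hw0, hall⟩
    classical
    obtain ⟨N, hN⟩ := hk w 0
    push Not at hall
    obtain ⟨i, hi, hik⟩ := hall
    have hiN : i ≤ N := by
      by_contra h
      exact hik (by simpa using hN i (by omega))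
    let a := Nat.findGreatest (fun i => ¬ L.Kills (i • k) w) N
    have ha : ¬ L.Kills (a • k) w := Nat.findGreatest_spec (P := fun i => ¬ L.Kills (i • k) w)
      hiN hik
    have hamax : ∀ c, a < c → L.Kills (c • k) w := by
      intro c hc
      by_cases hcN : c ≤ N
      · exact not_not.1 (Nat.findGreatest_is_greatest hc hcN)
      · simpa using hN c (by omega)
    unfold Kills at ha
    push Not at ha
    obtain ⟨p, b, hpb⟩ := ha
    refine ⟨j + a, by omega, by omega, L.X (a • k) p b w,
      X_mem_Wt' hw p b (by module), hpb, ?_⟩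
    intro c hc q b'
    rw [L.comm, hamax c (by omega), ← add_smul, hamax (c + a) (by omega)]
    simp
  have step2 : ∀ J : ℕ, ∃ j ≥ J, 1 ≤ j ∧ (χ + pg (x + j • k)) u ≠ 0 ∧
      ∃ w ∈ L.Wt (χ + pg (x + j • k)), w ≠ 0 ∧ ∀ i ≥ j, L.Kills (i • k) w := by
    have hform : ∀ j : ℕ, (χ + pg (x + j • k)) u = (χ + pg x) u + j * pg k u := by
      intro j; simp [add_assoc]
    intro J
    by_cases h : ∃ j0 : ℕ, (χ + pg (x + j0 • k)) u = 0
    · obtain ⟨j0, hj0⟩ := h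
      obtain ⟨j, hj, h1, h2⟩ := step (max J (j0 + 1))
      simp only [ge_iff_le, max_le_iff] at hj
      refine ⟨j, hj.1, h1, fun h3 => ?_, h2⟩
      rw [hform] at h3 hj0
      have : ((j : ℂ) - j0) * pg k u = 0 := by linear_combination h3 - hj0
      rcases mul_eq_zero.1 this with h4 | h4
      · have : (j : ℂ) = j0 := sub_eq_zero.1 h4
        have : j = j0 := by exact_mod_cast this
        omega
      · exact hu h4
    · push Not at h
      obtain ⟨j, hj, h1, h2⟩ := step J
      exact ⟨j, hj, h1, h j, h2⟩
  choose f hfJ hf1 hfu w hw hw0 hwk using step2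
  let a : ℕ → ℕ := fun i => Nat.rec 0 (fun _ c => 2 * f c) i
  have ha : ∀ i, a (i + 1) = 2 * f (a i) := fun i => rfl
  have hfa : ∀ i l, i < l → 2 * f (a i) ≤ f (a l) := by
    intro i l hil
    obtain ⟨d, rfl⟩ := Nat.exists_eq_add_of_lt hil
    clear hil
    induction d with
    | zero => rw [add_zero, ← ha]; exact hfJ _
    | succ d ih =>
      refine ih.trans ?_
      have h1 := hfJ (a (i + d + 1 + 1))
      have h2 := ha (i + d + 1)
      rw [show i + (d + 1) + 1 = i + d + 1 + 1 by ring]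
      omega
  have := hL.fin (χ + pg x)
  have hcard := card_le_finrank_of_triangular (ι := Fin (finrank ℂ (L.Wt (χ + pg x)) + 1))
    (L.Wt (χ + pg x))
    (fun i => L.X (-(f (a i) • k)) u 1 (w (a i)))
    (fun i => X_mem_Wt' (hw (a i)) _ _ (by abel))
    (fun l => L.X (f (a l) • k) u 1)
    (fun l => by
      rw [L.comm, hwk _ _ le_rfl, add_neg_cancel, map_zero, zero_add, ← sub_smul, map_smul,
        LinearMap.smul_apply, LinearMap.smul_apply, mul_one, mem_Wt.1 (hw (a l)) u]
      refine smul_ne_zero ?_ (smul_ne_zero (hfu _) (hw0 _))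
      have : (f (a l) : ℂ) ≠ 0 := by
        have := hf1 (a l)
        exact_mod_cast (by omega : f (a l) ≠ 0)
      simp only [map_neg, map_nsmul, LinearMap.neg_apply, LinearMap.smul_apply, nsmul_eq_mul]
      intro h
      have h2 : (f (a l) : ℂ) * pg k u = 0 := by linear_combination (-1 / 2) * h
      exact mul_ne_zero this hu h2)
    (fun i l hil => by
      have h1 := hfa i l hil
      obtain ⟨d, hd⟩ := Nat.exists_eq_add_of_le h1
      rw [L.comm, hwk _ _ (by omega), hd, show (2 * f (a i) + d) • k + -(f (a i) • k) =
        (f (a i) + d) • k by module, hwk _ (f (a i) + d) (by omega)]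
      simp)
  simp at hcard

lemma le_finrank_wt (hL : L.Good χ) {r y : G} (hr : r ≠ 0) {p : ℕ} {v : V}
    (hv : v ∈ L.Wt (χ + pg (y + p • r))) (hv0 : v ≠ 0) (hk : ∀ i : ℕ, 1 ≤ i → L.KillsOne (i • r) v)
    {u : P} (hu : pg r u = 0) (hc : (χ + pg y) u ≠ 0) {M : ℕ} (hM : 2 * M < p) :
    M ≤ finrank ℂ (L.Wt (χ + pg y)) := by
  obtain ⟨e', he'⟩ := hL.inj r hr
  obtain ⟨e, he⟩ : ∃ e, pg r e = 1 := ⟨(pg r e')⁻¹ • e', by simp [he']⟩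
  let J : ℤ → Module.End ℂ V := fun j => L.X (j • r) u 1
  let T : ℤ → Module.End ℂ V := fun j => L.X (j • r) e 1
  have hJJ : ∀ i j w, J i (J j w) = J j (J i w) := by
    intro i j w
    simp only [J]
    rw [L.comm]
    simp [hu]
  have hTJ : ∀ i j w, T i (J j w) = J j (T i w) + (j : ℂ) • J (i + j) w := by
    intro i j w
    simp only [J, T]
    rw [L.comm, ← add_smul]
    simp [hu, he]
  have hkill : ∀ i : ℤ, 1 ≤ i → L.KillsOne (i • r) v := by
    intro i hi
    lift i to ℕ using by omega
    simpa using hk i (by omega)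
  have hJv : ∀ i : ℤ, 1 ≤ i → J i v = 0 := fun i hi => hkill i hi u
  have hTv : ∀ i : ℤ, 1 ≤ i → T i v = 0 := fun i hi => hkill i hi e
  have hJ0 : J 0 v = (χ + pg y) u • v := by
    have := mem_Wt.1 hv u
    simp only [J, zero_smul]
    rw [this]
    simp [hu]
  have := hL.fin (χ + pg y)
  let d : (Fin M)ᵒᵈ → ℤ := fun i => ((OrderDual.ofDual i : Fin M) : ℕ) + 1
  have hd : ∀ i, 1 ≤ d i ∧ d i ≤ M := fun i => by
    have := (OrderDual.ofDual i : Fin M).2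
    simp only [d]; omega
  have hdlt : ∀ i l, i < l → d l < d i := fun i l hil => by
    have : (OrderDual.ofDual l : Fin M) < OrderDual.ofDual i := hil
    rw [Fin.lt_def] at this
    simp only [d]; omega
  have hcard := card_le_finrank_of_triangular (ι := (Fin M)ᵒᵈ) (L.Wt (χ + pg y))
    (fun i => J (-d i) (J (-((p : ℤ) - d i)) v))
    (fun i => X_mem_Wt' (X_mem_Wt' hv _ _ rfl) _ _ (by module))
    (fun j => T (d j) ∘ₗ T ((p : ℤ) - d j))
    (fun i => by
      rw [LinearMap.comp_apply]
      obtain ⟨h2, h4⟩ := hd i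
      generalize hA : (p : ℤ) - d i = A at *
      generalize d i = I at *
      rw [hTJ, hTJ, hTv A (by omega), hJJ (A + -I), hJv (A + -I) (by omega), add_neg_cancel, hJ0]
      simp only [map_zero, smul_zero, zero_add, add_zero, map_smul]
      rw [hTJ, hTv I (by omega), add_neg_cancel, hJ0]
      simp only [map_zero, zero_add, smul_smul]
      refine smul_ne_zero ?_ hv0
      have hA' : (A : ℂ) ≠ 0 := by exact_mod_cast (by omega : A ≠ 0)
      have hI' : (I : ℂ) ≠ 0 := by exact_mod_cast (by omega : I ≠ 0)
      push_cast
      simp only [ne_eq, mul_eq_zero, neg_eq_zero, hA', hI', hc, or_self, not_false_eq_true])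
    (fun i l hil => by
      rw [LinearMap.comp_apply]
      have h1 := hd i
      have h2 := hd l
      have h3 := hdlt i l hil
      rw [hTJ, hTJ, hTv _ (by omega), hJJ (_ + -_), hJv (_ + -d i) (by omega),
        hJv _ (by omega)]
      simp)
  simpa using hcard

end Good

end LoopAct

end LoopWitt

namespace LoopWitt

namespace LoopAct

variable {G P B V : Type*} [AddCommGroup G] [AddCommGroup P] [Module ℂ P]
  [CommRing B] [Algebra ℂ B] [AddCommGroup V] [Module ℂ V]
  {pg : G →+ (P →ₗ[ℂ] ℂ)} {L : LoopAct pg B V} {χ : P →ₗ[ℂ] ℂ}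

variable (pg) in
/-- The grading group has rank at least two, and proportional functionals come from
proportional degrees. -/
structure RankCond : Prop where
  exists_indep : ∀ k : G, ∃ e, ∀ a b : ℤ, a • e = b • k → a = 0
  par : ∀ r s : G, (∀ u, pg r u = 0 → pg s u = 0) → ∃ a b : ℤ, a ≠ 0 ∧ a • s = b • r

namespace Good

lemma exists_wt_ne_bot (hL : L.Good χ) : ∃ x, L.Wt (χ + pg x) ≠ ⊥ := by
  by_contra! h
  have := hL.nontriv
  exact bot_ne_top ((iSup_eq_bot.2 h).symm.trans hL.span)

lemma le_finrank_of_wt_ne_bot (hL : L.Good χ) {r y : G} (hr : L.EvKill r) {p : ℕ}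
    (hp : L.Wt (χ + pg (y + p • r)) ≠ ⊥) {u : P} (hu : pg r u = 0) (hc : (χ + pg y) u ≠ 0)
    {M : ℕ} (hM : 2 * M < p) : M ≤ finrank ℂ (L.Wt (χ + pg y)) := by
  classical
  obtain ⟨J, hJ⟩ := hL.eventually_wt_eq_bot hr y
  have hpJ : p ≤ J := by
    by_contra h
    exact hp (hJ p (by omega))
  let Q : ℕ → Prop := fun i => L.Wt (χ + pg (y + i • r)) ≠ ⊥
  let m := Nat.findGreatest Q J
  have hm : Q m := Nat.findGreatest_spec (P := Q) hpJ hp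
  have hpm : p ≤ m := Nat.le_findGreatest hpJ hp
  have hmax : ∀ i, m < i → L.Wt (χ + pg (y + i • r)) = ⊥ := by
    intro i hi
    by_cases hiJ : i ≤ J
    · exact not_not.1 (Nat.findGreatest_is_greatest (P := Q) hi hiJ)
    · exact hJ i (by omega)
  obtain ⟨v, hv, hv0⟩ := Submodule.exists_mem_ne_zero_of_ne_bot hm
  refine hL.le_finrank_wt (hL.ne_zero_of_evKill hr) hv hv0 (fun i hi q => ?_) hu hc
    (hM.trans_le hpm)
  have h1 := X_mem_Wt' (y := y + (m + i) • r) hv (r := i • r) q (1 : B) (by module)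
  rw [hmax _ (by omega)] at h1
  simpa using h1

lemma weak_of_killsOne (hL : L.Good χ) {l : G} (hl : l ≠ 0) {v : V} (hv : v ≠ 0) {a : ℕ}
    (ha : 1 ≤ a) (h1 : L.KillsOne (a • l) v) (h2 : L.KillsOne ((a + 1) • l) v) : L.Weak l := by
  have hne : ∀ i j : ℕ, i ≠ j → i • l ≠ j • l := by
    intro i j hij h
    have : ((i : ℤ) - j) • l = 0 := by rw [sub_smul, natCast_zsmul, natCast_zsmul, h, sub_self]
    rcases hL.smul_eq_zero this with h | h
    · omega
    · exact hl h
  have hadd : ∀ i j : ℕ, i ≠ j → L.KillsOne (i • l) v → L.KillsOne (j • l) v →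
      L.KillsOne ((i + j) • l) v := by
    intro i j hij hi hj
    rw [add_smul]
    exact hi.add hL.inj (hne i j hij) hj
  have key : ∀ i t : ℕ, 1 ≤ t → t ≤ i + 1 → L.KillsOne (((i + 2) * a + t) • l) v := by
    intro i
    induction i with
    | zero =>
      intro t ht ht'
      obtain rfl : t = 1 := by omega
      have := hadd a (a + 1) (by omega) h1 h2
      convert this using 2
      ring
    | succ i ih =>
      intro t ht ht'
      have hia : a ≤ (i + 1) * a := Nat.le_mul_of_pos_left a (by omega)
      by_cases h : t ≤ i + 1
      · have := hadd _ a (by rw [show (i + 2) * a = (i + 1) * a + a by ring]; omega)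
          (ih t ht h) h1
        convert this using 2
        ring
      · obtain rfl : t = i + 2 := by omega
        have := hadd _ (a + 1) (by rw [show (i + 2) * a = (i + 1) * a + a by ring]; omega)
          (ih (i + 1) (by omega) le_rfl) h2
        convert this using 2
        ring
  refine ⟨v, hv, (a + 1) * a + 1, fun j hj => ?_⟩
  have h3 : a + 1 ≤ (j - 1) / a := (Nat.le_div_iff_mul_le ha).2 (by omega)
  have h4 := Nat.mod_lt (j - 1) ha
  have h5 := Nat.div_add_mod' (j - 1) a
  have := key ((j - 1) / a - 2) ((j - 1) % a + 1) (by omega) (by omega)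
  rw [show (j - 1) / a - 2 + 2 = (j - 1) / a by omega,
    show (j - 1) / a * a + ((j - 1) % a + 1) = j by omega] at this
  exact this

lemma finrank_wt_bounded_of_not_weak [FiniteDimensional ℂ P] (hL : L.Good χ) {k : G}
    (hk0 : k ≠ 0) (hk : ¬ L.Weak (-k)) (x : G) :
    ∃ M, ∀ j : ℕ, finrank ℂ (L.Wt (χ + pg (x + j • k))) ≤ M := by
  have := hL.fin
  refine ⟨(finrank ℂ P + 1) * (finrank ℂ (L.Wt (χ + pg x)) + finrank ℂ (L.Wt (χ + pg (x + k)))),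
    fun j => ?_⟩
  by_contra! hlt
  have hj0 : j ≠ 0 := by rintro rfl; rw [zero_smul, add_zero] at hlt; nlinarith
  have hj1 : j ≠ 1 := by rintro rfl; rw [one_smul] at hlt; nlinarith
  obtain ⟨a, rfl⟩ : ∃ a, j = a + 1 := ⟨j - 1, by omega⟩
  let bs := Module.finBasis ℂ P
  obtain ⟨v, hv, hv0, hvk⟩ := exists_ne_zero_mem_forall_eq_zero
    (ι := Fin (finrank ℂ P) ⊕ Fin (finrank ℂ P))
    (L.Wt (χ + pg (x + (a + 1) • k)))
    (fun i => L.Wt (χ + pg (Sum.elim (fun _ => x) (fun _ => x + k) i)))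
    (hlt := by
      rw [Fintype.sum_sum_type]
      change ∑ _ : Fin (finrank ℂ P), finrank ℂ (L.Wt (χ + pg x)) +
        ∑ _ : Fin (finrank ℂ P), finrank ℂ (L.Wt (χ + pg (x + k))) < _
      rw [Finset.sum_const, Finset.sum_const, Finset.card_univ, Fintype.card_fin, smul_eq_mul,
        smul_eq_mul]
      nlinarith)
    (f := Sum.elim (fun i => L.X ((a + 1) • (-k)) (bs i) 1) (fun i => L.X (a • (-k)) (bs i) 1))
    (by
      rintro (i | i) v hv
      · exact X_mem_Wt' hv _ _ (show x = _ by module)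
      · exact X_mem_Wt' hv _ _ (show x + k = _ by module))
  have h1 : ∀ (m : G), (∀ i, L.X m (bs i) 1 v = 0) → L.KillsOne m v := by
    intro m h p
    exact LinearMap.congr_fun (bs.ext (f₁ := (LinearMap.applyₗ v) ∘ₗ (L.X m).flip 1) (f₂ := 0) h) p
  exact hk (hL.weak_of_killsOne (neg_ne_zero.2 hk0) hv0 (a := a) (by omega)
    (h1 _ fun i => hvk (Sum.inr i)) (h1 _ fun i => hvk (Sum.inl i)))

lemma evKill_of_zsmul_eq (hL : L.Good χ) {r k : G} (hr : L.EvKill r) (hk : k ≠ 0) {a b : ℤ}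
    (ha : a ≠ 0) (h : a • k = b • r) : L.EvKill k ∨ L.EvKill (-k) := by
  have hb : b ≠ 0 := by
    rintro rfl
    rw [zero_smul] at h
    rcases hL.smul_eq_zero h with h | h
    · exact ha h
    · exact hk h
  have h2 : ∀ k' : G, (a.natAbs : ℤ) • k' = (b.natAbs : ℤ) • r → L.EvKill k' := by
    intro k' hk'
    rw [natCast_zsmul, natCast_zsmul] at hk'
    exact hL.evKill_of_nsmul (m := a.natAbs) (by omega)
      (hk' ▸ hL.evKill_nsmul hr (m := b.natAbs) (by omega))
  rcases Int.natAbs_eq a with h3 | h3 <;> rcases Int.natAbs_eq b with h4 | h4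
  · left; apply h2; rw [← h3, ← h4, h]
  · right; apply h2; rw [smul_neg, ← h3, h, h4]; simp
  · right; apply h2; rw [smul_neg, ← neg_smul, ← h3, ← h4, h]
  · left; apply h2
    rw [h3, h4, neg_smul, neg_smul, neg_inj] at h; exact h

/-- The dichotomy that makes the killed directions the positive cone of a total preorder. -/
lemma evKill_dichotomy [FiniteDimensional ℂ P] (hL : L.Good χ)
    (hR : RankCond pg) {r : G} (hr : L.EvKill r) (k : G) :
    (∀ q : ℕ, L.EvKill (2 • r + q • k)) ∨ ∀ q : ℕ, L.EvKill (2 • r + q • (-k)) := by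
  have hr2 := hL.evKill_nsmul hr (m := 2) (by norm_num)
  have hw : ∀ k', L.Weak k' → ∀ q : ℕ, L.EvKill (2 • r + q • k') := by
    intro k' hk' q
    rcases Nat.eq_zero_or_pos q with rfl | hq
    · simpa using hr2
    · exact hL.evKill_add_of_weak hr2 hk' hq
  by_cases hwk : L.Weak (-k)
  · exact Or.inr (hw _ hwk)
  by_cases hall : ∀ q : ℕ, L.Weak (q • k + r)
  · left
    intro q
    have := hL.evKill_add_of_weak hr (hall q) (q := 1) le_rfl
    convert this using 1
    module
  exfalso
  push Not at hall
  obtain ⟨q, hq⟩ := hall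
  have hq0 : q ≠ 0 := by
    rintro rfl
    exact hq (by simpa using hL.weak_of_evKill hr)
  have hk0 : k ≠ 0 := by
    rintro rfl
    exact hq (by simpa using hL.weak_of_evKill hr)
  have hnp : ∀ a b : ℤ, a • k = b • r → a = 0 := by
    intro a b hab
    by_contra ha
    rcases hL.evKill_of_zsmul_eq hr hk0 ha hab with h | h
    · exact hq (hL.weak_of_evKill (hL.evKill_add (hL.evKill_nsmul h (by omega)) hr))
    · exact hwk (hL.weak_of_evKill h)
  obtain ⟨x, hx⟩ := hL.exists_wt_ne_bot
  obtain ⟨v, hv, hv0⟩ := Submodule.exists_mem_ne_zero_of_ne_bot hx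
  obtain ⟨M, hM⟩ := hL.finrank_wt_bounded_of_not_weak hk0 hwk x
  have hinf : ∀ N : ℕ, ∃ j ≥ N, L.Wt (χ + pg (x + j • (q • k + r))) ≠ ⊥ := by
    intro N
    have h1 : ¬ ∀ j ≥ N, L.KillsOne (j • (q • k + r)) v := fun h => hq ⟨v, hv0, N, h⟩
    unfold KillsOne at h1
    push Not at h1
    obtain ⟨j, hj, p, hp⟩ := h1
    exact ⟨j, hj, (Submodule.ne_bot_iff _).2 ⟨_, X_mem_Wt' hv _ _ rfl, hp⟩⟩
  have hbad : ∀ j > 2 * (M + 1), L.Wt (χ + pg (x + j • (q • k + r))) ≠ ⊥ →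
      ∀ u, pg r u = 0 → (χ + pg (x + (j * q) • k)) u = 0 := by
    intro j hj hj2 u hu
    by_contra hc
    have h1 := hL.le_finrank_of_wt_ne_bot hr (y := x + (j * q) • k) (p := j)
      (by convert hj2 using 4; module) hu hc hj
    have h2 := hM (j * q)
    omega
  obtain ⟨j, hj, hj2⟩ := hinf (2 * (M + 1) + 1)
  obtain ⟨j', hj', hj2'⟩ := hinf (j + 1)
  obtain ⟨a, b, ha, hab⟩ := hR.par r ((((j' : ℤ) - j) * q) • k) (by
    intro u hu
    have h1 := hbad j (by omega) hj2 u hu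
    have h2 := hbad j' (by omega) hj2' u hu
    simp only [map_add, map_nsmul, LinearMap.add_apply, LinearMap.smul_apply, map_zsmul,
      nsmul_eq_mul, zsmul_eq_mul] at h1 h2 ⊢
    push_cast at h1 h2 ⊢
    linear_combination h2 - h1)
  rw [smul_smul] at hab
  have := hnp _ _ hab
  simp only [mul_eq_zero] at this
  omega

lemma wt_sub_ne_bot' (hL : L.Good χ) (hR : RankCond pg)
    {k x y : G} (hk : L.EvKill k) (hx : L.Wt (χ + pg x) ≠ ⊥) (hy : y = x - k) :
    L.Wt (χ + pg y) ≠ ⊥ := by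
  subst hy
  refine hL.wt_sub_ne_bot (fun k => ?_) hk hx
  obtain ⟨e, he⟩ := hR.exists_indep k
  exact ⟨e, fun i h => one_ne_zero (he 1 i (by rw [one_smul, h]))⟩

lemma not_forall_evKill_sub (hL : L.Good χ) (hR : RankCond pg) {k : G} (hk : L.EvKill k) (s : G) :
    ¬ ∀ m : ℕ, L.EvKill (s - m • k) := by
  intro h
  obtain ⟨x, hx⟩ := hL.exists_wt_ne_bot
  obtain ⟨J, hJ⟩ := hL.eventually_wt_eq_bot hk (x - s)
  exact hL.wt_sub_ne_bot' hR (h J) hx (by abel) (hJ J le_rfl)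

lemma not_evKill_add [FiniteDimensional ℂ P] (hL : L.Good χ) (hR : RankCond pg) {r : G}
    (hr : L.EvKill r) {k l : G} (hk : ¬ L.EvKill k) (hl : ¬ L.EvKill l) : ¬ L.EvKill (k + l) := by
  have hr2 := hL.evKill_nsmul hr (m := 2) (by norm_num)
  have key : ∀ k, ¬ L.EvKill k → ∀ q : ℕ, L.EvKill (2 • r - q • k) := by
    intro k hk
    by_contra hN
    refine hk ?_
    have h1 : ∃ m : ℕ, ¬ ∀ q : ℕ, L.EvKill (2 • r + q • (4 • r - m • k)) := by
      by_contra! hall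
      refine hN fun q => hL.evKill_of_nsmul (m := 3) (by norm_num) ?_
      have := hall (3 * q) 1
      convert this using 1
      module
    obtain ⟨m, hm⟩ := h1
    have h2 := ((hL.evKill_dichotomy hR hr _).resolve_left hm) 1
    have h3 := hL.evKill_add h2 hr2
    have h4 : L.EvKill (m • k) := by
      convert h3 using 1
      module
    have hm0 : m ≠ 0 := by
      rintro rfl
      exact hL.not_evKill_zero (by simpa using h4)
    exact hL.evKill_of_nsmul (by omega) h4
  intro hkl
  refine hL.not_forall_evKill_sub hR hkl (2 • r) fun m => ?_
  refine hL.evKill_of_nsmul (m := 2) (by norm_num) ?_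
  have := hL.evKill_add (key k hk (2 * m)) (key l hl (2 * m))
  convert this using 1
  module

lemma exists_evKill_nsmul_sub [FiniteDimensional ℂ P] (hL : L.Good χ) (hR : RankCond pg) {k : G}
    (hk : L.EvKill k) (s : G) : ∃ m : ℕ, L.EvKill (m • k - s) := by
  by_contra! h
  refine hL.not_forall_evKill_sub hR hk (k + s) fun m => ?_
  by_contra h'
  exact hL.not_evKill_add hR hk h' (h m) (by convert hk using 1; abel)

lemma exists_minimal_evKill [FiniteDimensional ℂ P] (hL : L.Good χ) (hR : RankCond pg) {r : G}
    (hr : L.EvKill r) :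
    ∃ β, L.EvKill β ∧ ∀ k, L.EvKill k → ¬ L.EvKill (β - k) := by
  by_contra! hcon
  have hhalf : ∀ β, L.EvKill β → ∃ s, L.EvKill s ∧ ¬ L.EvKill (2 • s - β) := by
    intro β hβ
    obtain ⟨k, hk, hk'⟩ := hcon β hβ
    by_contra! h
    refine hL.not_evKill_zero ?_
    have := hL.evKill_add (h k hk) (h _ hk')
    convert this using 1
    module
  have hpow : ∀ t : ℕ, ∃ s, L.EvKill s ∧ ¬ L.EvKill (2 ^ t • s - r) := by
    intro t
    induction t with
    | zero => exact ⟨r, hr, by simpa using hL.not_evKill_zero⟩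
    | succ t ih =>
      obtain ⟨s, hs, hs'⟩ := ih
      obtain ⟨s', h1, h2⟩ := hhalf s hs
      refine ⟨s', h1, fun h => ?_⟩
      refine hL.not_evKill_add hR hr (k := 2 ^ t • (2 • s' - s)) (l := 2 ^ t • s - r)
        (fun h => h2 (hL.evKill_of_nsmul Nat.one_le_two_pow h)) hs' ?_
      convert h using 1
      module
  obtain ⟨x, hx⟩ := hL.exists_wt_ne_bot
  obtain ⟨e, he⟩ := hR.exists_indep 0
  obtain ⟨f, hf⟩ := hR.exists_indep e
  obtain ⟨m₁, hm₁⟩ := hL.exists_evKill_nsmul_sub hR hr e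
  obtain ⟨m₂, hm₂⟩ := hL.exists_evKill_nsmul_sub hR hr f
  let y := x - r - (m₁ + m₂ + 1) • r
  have hmul : ∀ m : ℕ, L.EvKill ((m + 1) • r) := fun m => hL.evKill_nsmul hr (by omega)
  have hy : ∀ s ∈ ({0, e, f} : Set G), L.Wt (χ + pg (y + s + r)) ≠ ⊥ := by
    rintro s (rfl | rfl | rfl)
    · exact hL.wt_sub_ne_bot' hR (hmul (m₁ + m₂)) hx (by simp only [y]; abel)
    · exact hL.wt_sub_ne_bot' hR (hL.evKill_add hm₁ (hmul m₂)) hx (by simp only [y]; module)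
    · exact hL.wt_sub_ne_bot' hR (hL.evKill_add hm₂ (hmul m₁)) hx (by simp only [y]; module)
  let M := finrank ℂ (L.Wt (χ + pg (y + 0))) + finrank ℂ (L.Wt (χ + pg (y + e))) +
    finrank ℂ (L.Wt (χ + pg (y + f))) + 1
  obtain ⟨s, hs, hs'⟩ := hpow (2 * M + 2)
  obtain ⟨p, hp, hpt⟩ : ∃ p, 2 * M < p ∧ p + 1 = 2 ^ (2 * M + 2) := by
    have : 2 * M + 2 < 2 ^ (2 * M + 2) := Nat.lt_two_pow_self
    exact ⟨2 ^ (2 * M + 2) - 1, by omega, by omega⟩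
  have hrs : L.EvKill (r - p • s) := by
    by_contra h
    refine hL.not_evKill_add hR hr h hs' ?_
    convert hs using 1
    rw [← hpt]
    module
  have hbad : ∀ t ∈ ({0, e, f} : Set G), ∀ u, pg s u = 0 → (χ + pg (y + t)) u = 0 := by
    intro t ht u hu
    by_contra hc
    have h1 := hL.le_finrank_of_wt_ne_bot hs (y := y + t) (p := p)
      (hL.wt_sub_ne_bot' hR hrs (hy t ht) (by abel)) hu hc hp
    rcases ht with rfl | rfl | rfl <;> simp only [M] at h1 <;> omega
  have hpar' : ∀ t ∈ ({0, e, f} : Set G), ∃ a b : ℤ, a ≠ 0 ∧ a • t = b • s := by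
    intro t ht
    refine hR.par s t fun u hu => ?_
    have h1 := hbad t ht u hu
    have h2 := hbad 0 (by simp) u hu
    simp only [map_add, LinearMap.add_apply, map_zero] at h1 h2 ⊢
    simp only [LinearMap.zero_apply] at h2
    linear_combination h1 - h2
  obtain ⟨a, b, ha, hab⟩ := hpar' e (by simp)
  obtain ⟨c, d, hc, hcd⟩ := hpar' f (by simp)
  have hb : b ≠ 0 := by
    rintro rfl
    exact ha (he a 0 (by simpa using hab))
  have : (b * c) • f = (d * a) • e := by
    rw [mul_smul, hcd, mul_smul, hab, smul_smul, smul_smul, mul_comm]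
  have := hf _ _ this
  simp [hb, hc] at this

/-- A module with an eventually killed direction is bounded above with respect to some
surjective degree. -/
theorem exists_degree [FiniteDimensional ℂ P] (hL : L.Good χ) (hR : RankCond pg) {r : G}
    (hr : L.EvKill r) :
    ∃ (deg : G →+ ℤ) (β x₀ : G), deg β = 1 ∧ L.Wt (χ + pg x₀) ≠ ⊥ ∧
      ∀ x, L.Wt (χ + pg x) ≠ ⊥ → deg x ≤ deg x₀ := by
  obtain ⟨β, hβ, hmin⟩ := hL.exists_minimal_evKill hR hr
  have hadd : ∀ {k l : G}, ¬ L.EvKill k → ¬ L.EvKill l → ¬ L.EvKill (k + l) :=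
    fun hk hl => hL.not_evKill_add hR hβ hk hl
  have hβn : ∀ d : ℤ, 1 ≤ d → L.EvKill (d • β) := by
    intro d hd
    lift d to ℕ using by omega
    rw [natCast_zsmul]
    exact hL.evKill_nsmul hβ (by omega)
  have hex : ∀ k : G, ∃ d : ℤ, ¬ L.EvKill (k - d • β) ∧ ¬ L.EvKill (d • β - k) := by
    intro k
    obtain ⟨m, hm⟩ := hL.exists_evKill_nsmul_sub hR hβ k
    obtain ⟨m', hm'⟩ := hL.exists_evKill_nsmul_sub hR hβ (-k)
    obtain ⟨d, hd, hdmax⟩ := Int.exists_greatest_of_bdd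
      (P := fun d : ℤ => ¬ L.EvKill (d • β - k)) ⟨m, fun d hd => by
        by_contra! h
        refine hd ?_
        have := hL.evKill_add hm (hβn (d - m) (by omega))
        convert this using 1
        module⟩ ⟨-m', fun h => hL.not_evKill_neg h (by convert hm' using 1; module)⟩
    refine ⟨d, fun h => ?_, hd⟩
    have h1 := hdmax (d + 1) (by
      have := hmin _ h
      convert this using 2
      module)
    omega
  choose dg hdg1 hdg2 using hex
  have huniq : ∀ (k : G) (d : ℤ), ¬ L.EvKill (k - d • β) → ¬ L.EvKill (d • β - k) → d = dg k := by
    intro k d h1 h2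
    by_contra hne
    rcases lt_or_gt_of_ne hne with h | h
    · refine hadd h1 (hdg2 k) ?_
      convert hβn (dg k - d) (by omega) using 1
      module
    · refine hadd h2 (hdg1 k) ?_
      convert hβn (d - dg k) (by omega) using 1
      module
  let deg : G →+ ℤ := AddMonoidHom.mk' dg fun k l => (huniq _ _ (by
    have := hadd (hdg1 k) (hdg1 l)
    convert this using 2
    module) (by
    have := hadd (hdg2 k) (hdg2 l)
    convert this using 2
    module)).symm
  have hpos : ∀ k, 1 ≤ deg k → L.EvKill k := by
    intro k hk
    by_contra h
    refine hadd h (hdg2 k) ?_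
    convert hβn (dg k) hk using 1
    module
  obtain ⟨x, hx⟩ := hL.exists_wt_ne_bot
  obtain ⟨J, hJ⟩ := hL.eventually_wt_eq_bot hβ x
  have hdβ : deg β = 1 := (huniq β 1 (by simpa using hL.not_evKill_zero)
    (by simpa using hL.not_evKill_zero)).symm
  obtain ⟨d, ⟨x₀, hx₀, rfl⟩, hmax⟩ := Int.exists_greatest_of_bdd
    (P := fun d => ∃ y, L.Wt (χ + pg y) ≠ ⊥ ∧ deg y = d) ⟨deg x + J + 1, by
      rintro _ ⟨y, hy, rfl⟩
      by_contra! h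
      refine hL.wt_sub_ne_bot' hR (hpos (y - (x + J • β)) ?_) hy (by abel) (hJ J le_rfl)
      simp [hdβ]
      omega⟩ ⟨deg x, x, hx, rfl⟩
  exact ⟨deg, β, x₀, hdβ, hx₀, fun y hy => hmax _ ⟨y, hy, rfl⟩⟩

end Good

end LoopAct

end LoopWitt

namespace LoopWitt

namespace LoopAct

/-- A finitely generated algebra is exhausted by the powers of a finite dimensional subspace. -/
lemma exists_finset_pow_span (B : Type*) [CommRing B] [Algebra ℂ B] [Algebra.FiniteType ℂ B] :
    ∃ s : Finset B, 1 ≤ Submodule.span ℂ (s : Set B) ∧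
      ∀ b : B, ∃ t : ℕ, b ∈ Submodule.span ℂ (s : Set B) ^ t := by
  classical
  obtain ⟨s, hs⟩ := (Algebra.FiniteType.out : (⊤ : Subalgebra ℂ B).FG)
  have h1 : (1 : Submodule ℂ B) ≤ Submodule.span ℂ ((insert 1 s : Finset B) : Set B) := by
    rw [Submodule.one_le]
    exact Submodule.subset_span (by simp)
  refine ⟨insert 1 s, h1, fun b => ?_⟩
  have hb : b ∈ Algebra.adjoin ℂ (s : Set B) := by rw [hs]; trivial
  induction hb using Algebra.adjoin_induction with
  | mem x hx => exact ⟨1, by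
      rw [pow_one]
      exact Submodule.subset_span (by simp [Finset.mem_coe.1 hx])⟩
  | algebraMap c => exact ⟨0, by
      rw [pow_zero, Submodule.mem_one]
      exact ⟨c, rfl⟩⟩
  | add x y _ _ hx hy =>
    obtain ⟨t, ht⟩ := hx
    obtain ⟨u, hu⟩ := hy
    exact ⟨max t u, add_mem (pow_le_pow_right' h1 (le_max_left _ _) ht)
      (pow_le_pow_right' h1 (le_max_right _ _) hu)⟩
  | mul x y _ _ hx hy =>
    obtain ⟨t, ht⟩ := hx
    obtain ⟨u, hu⟩ := hy
    exact ⟨t + u, by rw [pow_add]; exact Submodule.mul_mem_mul ht hu⟩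

variable {G P B V : Type*} [AddCommGroup G] [AddCommGroup P] [Module ℂ P]
  [CommRing B] [Algebra ℂ B] [AddCommGroup V] [Module ℂ V]
  {pg : G →+ (P →ₗ[ℂ] ℂ)} {L : LoopAct pg B V} {χ : P →ₗ[ℂ] ℂ}

/-- It suffices to kill one nonzero vector in direction `k` non-uniformly in the coefficient. -/
lemma Good.evKill_of_pointwise (hL : L.Good χ) {k : G} (hk : k ≠ 0) {v : V} (hv : v ≠ 0)
    (h : ∀ s b, ∃ N : ℕ, ∀ j ≥ N, ∀ p, L.X (j • k + s) p b v = 0) : L.EvKill k := by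
  classical
  let U : Submodule ℂ V :=
    { carrier := {v | ∀ s b, ∃ N : ℕ, ∀ j ≥ N, ∀ p, L.X (j • k + s) p b v = 0}
      add_mem' := by
        intro x y hx hy s b
        obtain ⟨N, hN⟩ := hx s b
        obtain ⟨M, hM⟩ := hy s b
        refine ⟨max N M, fun j hj p => ?_⟩
        rw [map_add, hN j (le_trans (le_max_left _ _) hj), hM j (le_trans (le_max_right _ _) hj),
          add_zero]
      zero_mem' := fun s b => ⟨0, fun j _ p => map_zero _⟩
      smul_mem' := by
        intro c x hx s b
        obtain ⟨N, hN⟩ := hx s b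
        exact ⟨N, fun j hj p => by rw [map_smul, hN j hj, smul_zero]⟩ }
  have hU : L.Inv U := by
    intro r q b' x hx s b
    obtain ⟨N, hN⟩ := hx s b
    obtain ⟨M, hM⟩ := hx (s + r) (b * b')
    refine ⟨max N M, fun j hj p => ?_⟩
    rw [L.comm, hN j (le_trans (le_max_left _ _) hj), add_assoc,
      hM j (le_trans (le_max_right _ _) hj), map_zero, zero_add]
  have hUtop := hL.eq_top_of_mem hU (v := v) h hv
  have hall : ∀ w : V, ∀ s b, ∃ N : ℕ, ∀ j ≥ N, ∀ p, L.X (j • k + s) p b w = 0 := by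
    intro w
    have : w ∈ U := by rw [hUtop]; trivial
    exact this
  have htop : L.evSub k = ⊤ := by
    refine hL.top_le fun x w hw s => ?_
    have := hL.fin (χ + pg x)
    obtain ⟨t, ht⟩ := (Submodule.fg_iff_finiteDimensional (L.Wt (χ + pg x))).2 this
    choose N hN using fun w => hall w s 1
    obtain ⟨M, hM⟩ := hL.eventually_ne hk (-s)
    have hunif : ∀ j ≥ t.sup N, ∀ p, ∀ w ∈ L.Wt (χ + pg x), L.X (j • k + s) p 1 w = 0 := by
      intro j hj p w hw
      have : L.Wt (χ + pg x) ≤ LinearMap.ker (L.X (j • k + s) p 1) := by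
        rw [← ht, Submodule.span_le]
        intro y hy
        exact hN y j ((Finset.le_sup hy).trans hj) p
      exact this hw
    refine ⟨max (t.sup N) M, fun j hj p b => ?_⟩
    have hj1 := le_trans (le_max_left _ _) hj
    have hg : j • k + s ≠ 0 := fun h0 => hM j (le_trans (le_max_right _ _) hj)
      (eq_neg_of_add_eq_zero_left h0)
    obtain ⟨q, hq⟩ := hL.inj _ hg
    have h1 := L.comm (j • k + s) 0 p q 1 b w
    rw [hunif j hj1 p _ (X_mem_Wt' hw q b (add_zero x).symm), hunif j hj1 p w hw] at h1
    simp only [map_zero, LinearMap.zero_apply, zero_smul, zero_sub, add_zero, one_mul, zero_add,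
      map_neg, map_smul, LinearMap.neg_apply, LinearMap.smul_apply] at h1
    rcases _root_.smul_eq_zero.1 (neg_eq_zero.1 h1.symm) with h2 | h2
    · exact absurd h2 hq
    · exact h2
  intro w
  rw [htop]
  trivial

/-- Unbounded weight multiplicities produce an eventually killed direction. -/
theorem exists_evKill {n : ℕ} (hn : 1 ≤ n) {pg : (Fin n → ℤ) →+ (P →ₗ[ℂ] ℂ)}
    {L : LoopAct pg B V} [FiniteDimensional ℂ P] [Algebra.FiniteType ℂ B] (hL : L.Good χ)
    (hub : ∀ M : ℕ, ∃ x, M < finrank ℂ (L.Wt (χ + pg x))) : ∃ k, L.EvKill k := by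
  classical
  obtain ⟨s, hs1, hs⟩ := exists_finset_pow_span B
  set B₀ := Submodule.span ℂ (s : Set B) with hB₀
  let fpt : Option (Fin n) → (Fin n → ℤ) := fun o => o.elim 0 fun i => Pi.single i 1
  let bs := Module.finBasis ℂ P
  have := hL.fin
  let small : Finset (Fin n → ℤ) := Fintype.piFinset fun _ => Finset.Icc (-3) 3
  obtain ⟨m, hm⟩ := hub ((∑ i : Option (Fin n) × Fin (finrank ℂ P) × s,
    finrank ℂ (L.Wt (χ + pg (fpt i.1)))) + small.sup fun x => finrank ℂ (L.Wt (χ + pg x)))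
  have hmbig : ∃ i, 4 ≤ |m i| := by
    by_contra! h
    have : m ∈ small := by
      simp only [small, Fintype.mem_piFinset, Finset.mem_Icc]
      intro i
      have := abs_lt.1 (h i)
      omega
    have := Finset.le_sup (f := fun x => finrank ℂ (L.Wt (χ + pg x))) this
    omega
  obtain ⟨i₀, hi₀⟩ := hmbig
  obtain ⟨v, hv, hv0, hvk⟩ := exists_ne_zero_mem_forall_eq_zero
    (ι := Option (Fin n) × Fin (finrank ℂ P) × s) (L.Wt (χ + pg m))
    (fun i => L.Wt (χ + pg (fpt i.1))) (fun i => L.X (fpt i.1 - m) (bs i.2.1) (i.2.2 : B))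
    (fun i v hv => X_mem_Wt' hv _ _ (by abel)) (by omega)
  let a : Option (Fin n) → (Fin n → ℤ) := fun f => fpt f - m
  let KB : ℕ → (Fin n → ℤ) → Prop := fun t g => ∀ b ∈ B₀ ^ t, ∀ p, L.X g p b v = 0
  have hKa : ∀ f, KB 1 (a f) := by
    intro f b hb p
    rw [pow_one, hB₀] at hb
    have h1 : ∀ b ∈ s, ∀ p, L.X (a f) p b v = 0 := by
      intro b hb p
      exact LinearMap.congr_fun (bs.ext (f₁ := (LinearMap.applyₗ v) ∘ₗ (L.X (a f)).flip b)
        (f₂ := 0) fun i => hvk (f, i, ⟨b, hb⟩)) p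
    have h2 : Submodule.span ℂ (s : Set B) ≤
        LinearMap.ker ((LinearMap.applyₗ v) ∘ₗ (L.X (a f) p)) :=
      Submodule.span_le.2 fun b hb => h1 b hb p
    exact h2 hb
  have hKadd : ∀ t t' g g', g ≠ g' → KB t g → KB t' g' → KB (t + t') (g + g') := by
    intro t t' g g' hne h h' b hb p
    rw [pow_add] at hb
    induction hb using Submodule.mul_induction_on' with
    | mem_mul_mem x hx y hy => exact X_add_eq_zero_of_ne hL.inj hne (h x hx) (h' y hy) p
    | add x _ y _ hx hy => rw [map_add, LinearMap.add_apply, hx, hy, add_zero]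
  obtain ⟨ε, hε, hεm⟩ : ∃ ε : ℤ, |ε| = 1 ∧ ε * m i₀ = - |m i₀| := by
    rcases abs_cases (m i₀) with h | h
    · exact ⟨-1, by simp, by omega⟩
    · exact ⟨1, by simp, by omega⟩
  let θ : (Fin n → ℤ) → ℤ := fun g => ε * g i₀
  have hθadd : ∀ g g', θ (g + g') = θ g + θ g' := fun g g' => by simp [θ, mul_add]
  have hθa : ∀ f, |m i₀| - 1 ≤ θ (a f) ∧ θ (a f) ≤ |m i₀| + 1 := by
    intro f
    have h1 : |ε * fpt f i₀| ≤ 1 := by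
      rw [abs_mul, hε, one_mul]
      rcases f with _ | i
      · simp [fpt]
      · by_cases h : i = i₀
        · subst h; simp [fpt]
        · simp [fpt, Ne.symm h]
    have h2 := abs_le.1 h1
    simp only [θ, a, Pi.sub_apply, mul_sub, hεm]
    omega
  let Q : ℕ → (Fin n → ℤ) → Prop := fun N g => (∃ t ≥ N, KB t g) ∧ 2 * |m i₀| - 2 ≤ θ g
  have hQ1 : ∀ N g f, Q N g → Q (N + 1) (g + a f) := by
    rintro N g f ⟨⟨t, ht, hK⟩, hθ⟩
    have h1 := hθa f
    refine ⟨⟨t + 1, by omega, hKadd _ _ _ _ (fun h => ?_) hK (hKa f)⟩, ?_⟩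
    · rw [h] at hθ; omega
    · rw [hθadd]; omega
  have hQ2 : ∀ f (c N : ℕ) g, Q N g → Q (N + c) (g + c • a f) := by
    intro f c
    induction c with
    | zero => intro N g h; simpa using h
    | succ c ih =>
      intro N g h
      have := hQ1 _ _ f (ih N g h)
      rwa [add_assoc, add_assoc, ← succ_nsmul] at this
  have hQ3 : ∀ (c : Option (Fin n) → ℕ) (F : Finset (Option (Fin n))) (N : ℕ) g, Q N g →
      Q (N + ∑ f ∈ F, c f) (g + ∑ f ∈ F, c f • a f) := by
    intro c F
    induction F using Finset.induction_on with
    | empty => intro N g h; simpa using h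
    | insert f F hf ih =>
      intro N g h
      rw [Finset.sum_insert hf, Finset.sum_insert hf, ← add_assoc, ← add_assoc]
      exact ih _ _ (hQ2 f _ _ _ h)
  let i₁ : Fin n := ⟨0, by omega⟩
  have hane : a none ≠ a (some i₁) := by
    intro h
    have := congrFun h i₁
    simp [a, fpt] at this
    omega
  have hQ0 : Q 2 (a none + a (some i₁)) := by
    refine ⟨⟨2, le_rfl, hKadd 1 1 _ _ hane (hKa _) (hKa _)⟩, ?_⟩
    have h1 := hθa none
    have h2 := hθa (some i₁)
    rw [hθadd]; omega
  refine ⟨∑ f, a f, hL.evKill_of_pointwise (v := v) ?_ hv0 ?_⟩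
  · intro h0
    have h1 : ∀ F : Finset (Option (Fin n)), 0 ≤ θ (∑ f ∈ F, a f) := by
      intro F
      induction F using Finset.induction_on with
      | empty => simp [θ]
      | insert f F hf ih =>
        have := hθa f
        rw [Finset.sum_insert hf, hθadd]; omega
    have h2 := h1 (Finset.univ.erase none)
    have h3 := congrArg θ (Finset.add_sum_erase Finset.univ a (Finset.mem_univ none))
    rw [hθadd, h0] at h3
    have h4 := hθa none
    have h5 : θ 0 = 0 := by simp [θ]
    omega
  · intro z b
    obtain ⟨t₀, ht₀⟩ := hs b
    refine ⟨(∑ i, (z i).natAbs) + t₀ + 2, fun j hj p => ?_⟩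
    let co : Option (Fin n) → ℤ := fun o => o.elim (j - ∑ i, z i) fun i => j + z i
    have hz : ∀ i, |z i| ≤ ∑ i, (z i).natAbs := by
      intro i
      have := Finset.single_le_sum (f := fun i => (z i).natAbs) (fun _ _ => Nat.zero_le _)
        (Finset.mem_univ i)
      rw [Int.abs_eq_natAbs]
      exact_mod_cast this
    have hzs : |∑ i, z i| ≤ ((∑ i, (z i).natAbs : ℕ) : ℤ) := by
      refine (Finset.abs_sum_le_sum_abs _ _).trans (le_of_eq ?_)
      push_cast
      rfl
    have hco : ∀ f, (t₀ : ℤ) + 2 ≤ co f := by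
      rintro (_ | i)
      · have := abs_le.1 hzs
        simp only [co, Option.elim]
        zify at hj
        push_cast at this
        omega
      · have := abs_le.1 (hz i)
        simp only [co, Option.elim]
        zify at hj
        push_cast at this
        omega
    let δ : Option (Fin n) → ℤ := fun f =>
      (if f = none then 1 else 0) + if f = some i₁ then 1 else 0
    have hδ : ∀ f, 0 ≤ δ f ∧ δ f ≤ 2 := fun f => by
      simp only [δ]; split_ifs <;> omega
    have hcn : ∀ f, ((co f - δ f).toNat : ℤ) = co f - δ f := fun f => by
      have := hco f
      have := hδ f
      omega
    obtain ⟨⟨t, ht, hK⟩, -⟩ := hQ3 (fun f => (co f - δ f).toNat) Finset.univ 2 _ hQ0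
    have hsum : a none + a (some i₁) + ∑ f, (co f - δ f).toNat • a f = j • ∑ f, a f + z := by
      have e1 : ∀ f, (co f - δ f).toNat • a f = co f • a f - δ f • a f := fun f => by
        rw [← natCast_zsmul, hcn, sub_smul]
      simp only [e1, Finset.sum_sub_distrib]
      have e2 : ∑ f, δ f • a f = a none + a (some i₁) := by
        simp [δ, add_smul, Finset.sum_add_distrib, ite_smul]
      rw [e2, add_sub_cancel]
      simp only [Fintype.sum_option, co, a, fpt, Option.elim]
      have e3 : ∑ i, (j + z i) • ((Pi.single i 1 : Fin n → ℤ) - m) =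
          ∑ i, (j : ℤ) • ((Pi.single i 1 : Fin n → ℤ) - m) + (z - (∑ i, z i) • m) := by
        simp only [add_smul, Finset.sum_add_distrib]
        congr 1
        simp only [smul_sub, Finset.sum_sub_distrib, Finset.sum_smul]
        congr 1
        ext i
        simp [Finset.sum_apply, Pi.single_apply]
      rw [e3, ← Finset.smul_sum]
      module
    rw [← hsum]
    refine hK b (pow_le_pow_right' hs1 ?_ ht₀) p
    have h1 := Finset.single_le_sum (f := fun f => (co f - δ f).toNat)
      (fun _ _ => Nat.zero_le _) (Finset.mem_univ none)
    have h2 := hcn none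
    have h3 := hco none
    have h4 := hδ none
    omega

end LoopAct

end LoopWitt

namespace LoopWitt

/-- Finitely many maps out of a family suffice to separate the points of a finite dimensional
space separated by the whole family. -/
lemma exists_finset_separating {ι V V' : Type*} [AddCommGroup V] [Module ℂ V]
    [AddCommGroup V'] [Module ℂ V']
    (Y : Submodule ℂ V) [FiniteDimensional ℂ Y] (f : ι → V →ₗ[ℂ] V')
    (h : ∀ y ∈ Y, (∀ i, f i y = 0) → y = 0) :
    ∃ T : Finset ι, ∀ y ∈ Y, (∀ i ∈ T, f i y = 0) → y = 0 := by
  classical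
  let g : Finset ι → Submodule ℂ Y := fun T => ⨅ i ∈ T, LinearMap.ker (f i ∘ₗ Y.subtype)
  have hmem : ∀ T (y : Y), y ∈ g T ↔ ∀ i ∈ T, f i y = 0 := by
    intro T y; simp [g, Submodule.mem_iInf]
  obtain ⟨_, ⟨T, rfl⟩, hmin⟩ := WellFounded.has_min (wellFounded_lt (α := Submodule ℂ Y))
    (Set.range g) ⟨_, ∅, rfl⟩
  refine ⟨T, fun y hy hT => h y hy fun i => ?_⟩
  by_contra hi
  refine hmin (g (insert i T)) ⟨_, rfl⟩ (lt_of_le_not_ge ?_ fun hle => ?_)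
  · intro w hw
    rw [hmem] at hw ⊢
    exact fun j hj => hw j (Finset.mem_insert_of_mem hj)
  · have := hle ((hmem T ⟨y, hy⟩).2 hT)
    rw [hmem] at this
    exact hi (this i (Finset.mem_insert_self _ _))

variable {G P B V : Type*} [AddCommGroup G] [AddCommGroup P] [Module ℂ P]
  [CommRing B] [Algebra ℂ B] [AddCommGroup V] [Module ℂ V]

namespace LoopAct

variable {pg : G →+ (P →ₗ[ℂ] ℂ)} {L : LoopAct pg B V} {χ : P →ₗ[ℂ] ℂ} {deg : G →+ ℤ} {u0 : P}

variable (L) in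
/-- A module whose support lies in the half space `deg ≤ 0` and meets `deg = 0`. -/
structure Highest (χ : P →ₗ[ℂ] ℂ) (deg : G →+ ℤ) (u0 : P) : Prop extends L.Good χ where
  pg_u0 : ∀ m, pg m u0 = deg m
  deg_le : ∀ x, L.Wt (χ + pg x) ≠ ⊥ → deg x ≤ 0
  wt_ne : L.Wt χ ≠ ⊥

variable (L χ u0) in
/-- The level of degree `d`. -/
def Lev (d : ℤ) : Submodule ℂ V := (L.X 0 u0 1).eigenspace (χ u0 + d)

lemma mem_Lev {d : ℤ} {v : V} : v ∈ L.Lev χ u0 d ↔ L.X 0 u0 1 v = (χ u0 + d) • v :=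
  Module.End.mem_eigenspace_iff

variable (L χ u0) in
/-- The sum of the levels below the top. -/
def Low : Submodule ℂ V := ⨆ d : {d : ℤ // d < 0}, L.Lev χ u0 d

namespace Highest

lemma X_mem_Lev (hH : L.Highest χ deg u0) {d e : ℤ} {v : V} (hv : v ∈ L.Lev χ u0 d) {r : G}
    (p : P) (b : B) (he : e = d + deg r) : L.X r p b v ∈ L.Lev χ u0 e := by
  rw [mem_Lev] at hv ⊢
  rw [L.comm, hv, hH.pg_u0]
  simp [he, ← add_smul, add_assoc]

lemma Wt_le_Lev (hH : L.Highest χ deg u0) (x : G) : L.Wt (χ + pg x) ≤ L.Lev χ u0 (deg x) := by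
  intro v hv
  rw [mem_Lev, hv u0, LinearMap.add_apply, hH.pg_u0]

lemma indep_Lev (_ : L.Highest χ deg u0) : iSupIndep (L.Lev χ u0) := by
  refine ((L.X 0 u0 1).eigenspaces_iSupIndep).comp (f := fun d : ℤ => χ u0 + d) ?_
  intro x y h
  simpa using h

lemma Lev_eq_bot (hH : L.Highest χ deg u0) {d : ℤ} (hd : 0 < d) : L.Lev χ u0 d = ⊥ := by
  have h := hH.indep_Lev d
  have h2 : ⨆ j, ⨆ (_ : j ≠ d), L.Lev χ u0 j = ⊤ := by
    refine hH.top_le fun x => ?_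
    by_cases hx : L.Wt (χ + pg x) = ⊥
    · rw [hx]; exact bot_le
    · have := hH.deg_le x hx
      exact (hH.Wt_le_Lev x).trans (le_iSup₂_of_le (deg x) (by omega) le_rfl)
  rw [h2] at h
  exact disjoint_top.1 h

lemma Lev_le_Low (_ : L.Highest χ deg u0) {d : ℤ} (hd : d < 0) :
    L.Lev χ u0 d ≤ L.Low χ u0 :=
  le_iSup (fun d : {d : ℤ // d < 0} => L.Lev χ u0 d) ⟨d, hd⟩

lemma disjoint_Lev_Low (hH : L.Highest χ deg u0) : Disjoint (L.Lev χ u0 0) (L.Low χ u0) := by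
  refine (hH.indep_Lev 0).mono_right (iSup_le fun d => ?_)
  exact le_iSup₂_of_le d.1 d.2.ne le_rfl

lemma X_eq_zero (hH : L.Highest χ deg u0) {d : ℤ} {v : V} (hv : v ∈ L.Lev χ u0 d) {r : G}
    (p : P) (b : B) (h : 0 < d + deg r) : L.X r p b v = 0 := by
  have := hH.X_mem_Lev (r := r) hv p b rfl
  rw [hH.Lev_eq_bot h] at this
  simpa using this

lemma Lev_ne_bot (hH : L.Highest χ deg u0) : L.Lev χ u0 0 ≠ ⊥ := by
  have := hH.Wt_le_Lev 0
  rw [map_zero, map_zero, add_zero] at this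
  exact fun h => hH.wt_ne (le_bot_iff.1 (h ▸ this))

lemma Low_ne_top (hH : L.Highest χ deg u0) : L.Low χ u0 ≠ ⊤ := by
  intro h
  have := hH.disjoint_Lev_Low
  rw [h, disjoint_top] at this
  exact hH.Lev_ne_bot this

lemma X_mem_Low (hH : L.Highest χ deg u0) {v : V} (hv : v ∈ L.Low χ u0) {r : G} (p : P) (b : B)
    (hr : deg r ≤ 0) : L.X r p b v ∈ L.Low χ u0 := by
  have : L.Low χ u0 ≤ (L.Low χ u0).comap (L.X r p b) := by
    refine iSup_le fun d w hw => ?_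
    exact hH.Lev_le_Low (by have := d.2; omega) (hH.X_mem_Lev hw p b rfl)
  exact this hv

/-- If a subspace `U` is killed by all operators of positive degree, then a subspace containing
`U` and closed under operators of nonpositive degree is everything, unless `U` is zero. -/
lemma eq_top_of_closed (hH : L.Highest χ deg u0) {U W : Submodule ℂ V}
    (hU : ∀ v ∈ U, ∀ r p b, 0 < deg r → L.X r p b v = 0) (h0 : U ≠ ⊥) (hUW : U ≤ W)
    (hW : ∀ v ∈ W, ∀ r p b, deg r ≤ 0 → L.X r p b v ∈ W) : W = ⊤ := by
  let C : Set (Submodule ℂ V) := {W | U ≤ W ∧ ∀ v ∈ W, ∀ r p b, deg r ≤ 0 → L.X r p b v ∈ W}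
  let M := sInf C
  have hMU : U ≤ M := le_sInf fun W hW => hW.1
  have hMc : ∀ v ∈ M, ∀ r p b, deg r ≤ 0 → L.X r p b v ∈ M := by
    intro v hv r p b hr
    refine Submodule.mem_sInf.2 fun W hW => hW.2 v (Submodule.mem_sInf.1 hv W hW) r p b hr
  let M' : Submodule ℂ V :=
    M ⊓ ⨅ r : {r : G // 0 < deg r}, ⨅ p : P, ⨅ b : B, M.comap (L.X r.1 p b)
  have hM' : ∀ v, v ∈ M' ↔ v ∈ M ∧ ∀ r p b, 0 < deg r → L.X r p b v ∈ M := by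
    intro v
    simp only [M', Submodule.mem_inf, Submodule.mem_iInf, Submodule.mem_comap, Subtype.forall]
    exact ⟨fun h => ⟨h.1, fun r p b hr => h.2 r hr p b⟩,
      fun h => ⟨h.1, fun r hr p b => h.2 r p b hr⟩⟩
  have hle : M ≤ M' := by
    refine sInf_le ⟨fun v hv => (hM' v).2 ⟨hMU hv, fun r p b hr => ?_⟩, fun v hv s q b' hs => ?_⟩
    · rw [hU v hv r p b hr]; exact M.zero_mem
    · have hv' := (hM' v).1 hv
      refine (hM' _).2 ⟨hMc v hv'.1 s q b' hs, fun r p b hr => ?_⟩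
      rw [L.comm]
      refine M.add_mem (hMc _ (hv'.2 r p b hr) s q b' hs) ?_
      rcases le_or_gt (deg (r + s)) 0 with h | h
      · exact hMc _ hv'.1 _ _ _ h
      · exact hv'.2 _ _ _ h
  have hinv : L.Inv M := by
    intro r p b v hv
    rcases le_or_gt (deg r) 0 with h | h
    · exact hMc _ hv _ _ _ h
    · exact ((hM' v).1 (hle hv)).2 _ _ _ h
  have hM : M = ⊤ := by
    rcases hH.irr M hinv with h | h
    · exact absurd (le_bot_iff.1 (h ▸ hMU)) h0
    · exact h
  exact top_unique (hM ▸ sInf_le ⟨hUW, hW⟩)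

/-- There are no singular vectors below the top. -/
lemma eq_zero_of_singular (hH : L.Highest χ deg u0) {w : V} (hw : w ∈ L.Low χ u0)
    (h : ∀ r p b, 0 < deg r → L.X r p b w = 0) : w = 0 := by
  by_contra h0
  refine hH.Low_ne_top (hH.eq_top_of_closed (U := ℂ ∙ w) ?_ ?_ ?_ ?_)
  · intro v hv r p b hr
    obtain ⟨c, rfl⟩ := Submodule.mem_span_singleton.1 hv
    rw [map_smul, h r p b hr, smul_zero]
  · simpa using h0
  · simpa using hw
  · exact fun v hv r p b hr => hH.X_mem_Low hv p b hr

/-- The top level is irreducible. -/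
lemma eq_Lev_of_invariant (hH : L.Highest χ deg u0) {U : Submodule ℂ V} (hU : U ≤ L.Lev χ u0 0)
    (hinv : ∀ v ∈ U, ∀ r p b, deg r = 0 → L.X r p b v ∈ U) (h0 : U ≠ ⊥) : U = L.Lev χ u0 0 := by
  have h : U ⊔ L.Low χ u0 = ⊤ := by
    refine hH.eq_top_of_closed (U := U) ?_ h0 le_sup_left ?_
    · exact fun v hv r p b hr => hH.X_eq_zero (hU hv) p b (by omega)
    · intro v hv r p b hr
      obtain ⟨u, hu, w, hw, rfl⟩ := Submodule.mem_sup.1 hv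
      rw [map_add]
      refine Submodule.add_mem _ ?_ (Submodule.mem_sup_right (hH.X_mem_Low hw p b hr))
      rcases hr.lt_or_eq with h | h
      · exact Submodule.mem_sup_right
          (hH.Lev_le_Low (d := 0 + deg r) (by omega) (hH.X_mem_Lev (hU hu) p b rfl))
      · exact Submodule.mem_sup_left (hinv u hu r p b h)
  have h2 := sup_inf_assoc_of_le (L.Low χ u0) hU
  rw [h, top_inf_eq, inf_comm, hH.disjoint_Lev_Low.eq_bot, sup_bot_eq] at h2
  exact h2.symm

lemma iSup_Wt_eq_Lev (hH : L.Highest χ deg u0) :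
    ⨆ x : deg.ker, L.Wt (χ + pg x) = L.Lev χ u0 0 := by
  have hle : ⨆ x : deg.ker, L.Wt (χ + pg x) ≤ L.Lev χ u0 0 := by
    refine iSup_le fun x => ?_
    have := hH.Wt_le_Lev x.1
    rwa [x.2] at this
  have h : (⨆ x : deg.ker, L.Wt (χ + pg x)) ⊔ L.Low χ u0 = ⊤ := by
    refine hH.top_le fun x => ?_
    by_cases hx : L.Wt (χ + pg x) = ⊥
    · rw [hx]; exact bot_le
    · rcases (hH.deg_le x hx).lt_or_eq with h | h
      · exact ((hH.Wt_le_Lev x).trans (hH.Lev_le_Low h)).trans le_sup_right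
      · exact le_sup_of_le_left (le_iSup (fun x : deg.ker => L.Wt (χ + pg x)) ⟨x, h⟩)
  have h2 := sup_inf_assoc_of_le (L.Low χ u0) hle
  rw [h, top_inf_eq, inf_comm, hH.disjoint_Lev_Low.eq_bot, sup_bot_eq] at h2
  exact h2.symm

/-- A graded ideal of operators whose degree zero part kills the top level acts by zero. -/
lemma eq_zero_of_ideal (hH : L.Highest χ deg u0) (I : G → Set (Module.End ℂ V))
    (hI : ∀ r p b s, ∀ i ∈ I s, L.X r p b * i - i * L.X r p b ∈ I (r + s))
    (hdeg : ∀ s, ∀ i ∈ I s, ∀ d, ∀ v ∈ L.Lev χ u0 d, i v ∈ L.Lev χ u0 (d + deg s))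
    (h0 : ∀ s, deg s = 0 → ∀ i ∈ I s, ∀ v ∈ L.Lev χ u0 0, i v = 0)
    {s : G} {i : Module.End ℂ V} (hi : i ∈ I s) : i = 0 := by
  have comm : ∀ (r : G) (p : P) (b : B) (i : Module.End ℂ V) (v : V),
      L.X r p b (i v) = i (L.X r p b v) + (L.X r p b * i - i * L.X r p b) v := by
    intro r p b i v
    simp
  have hpos : ∀ s, ∀ i ∈ I s, 0 < deg s → ∀ v ∈ L.Lev χ u0 0, i v = 0 := by
    intro s i hi hs v hv
    have := hdeg s i hi 0 v hv
    rw [hH.Lev_eq_bot (by omega)] at this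
    simpa using this
  have key : ∀ N : ℕ, ∀ s, -(N : ℤ) ≤ deg s → ∀ i ∈ I s, ∀ v ∈ L.Lev χ u0 0, i v = 0 := by
    intro N
    induction N with
    | zero =>
      intro s hs i hi v hv
      rcases lt_or_eq_of_le hs with h | h
      · exact hpos s i hi (by simpa using h) v hv
      · exact h0 s (by simpa using h.symm) i hi v hv
    | succ N ih =>
      intro s hs i hi v hv
      push_cast at hs
      rcases le_or_gt (-(N : ℤ)) (deg s) with h | h
      · exact ih s h i hi v hv
      · refine hH.eq_zero_of_singular
          (hH.Lev_le_Low (d := 0 + deg s) (by omega) (hdeg s i hi 0 v hv)) fun r p b hr => ?_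
        rw [comm, hH.X_eq_zero hv p b (by omega), map_zero, zero_add]
        exact ih _ (by rw [map_add]; omega) _ (hI r p b s i hi) v hv
  let U : Submodule ℂ V := ⨅ s : G, ⨅ i : I s, LinearMap.ker i.1
  have hU : ∀ v, v ∈ U ↔ ∀ s, ∀ i ∈ I s, i v = 0 := by
    intro v; simp [U, Submodule.mem_iInf]
  have hUinv : L.Inv U := by
    intro r p b v hv
    rw [hU] at hv ⊢
    intro s i hi
    have := comm r p b i v
    rw [hv s i hi, hv _ _ (hI r p b s i hi), map_zero, add_zero] at this
    exact this.symm
  obtain ⟨v, hv, hv0⟩ := Submodule.exists_mem_ne_zero_of_ne_bot hH.Lev_ne_bot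
  have hvU : v ∈ U := (hU v).2 fun s i hi => key (-deg s).toNat s (by omega) i hi v hv
  have htop := hH.eq_top_of_mem hUinv hvU hv0
  ext w
  exact (hU w).1 (htop ▸ Submodule.mem_top) s i hi

/-- The action of the degree zero part on the top level. -/
def topAct (hH : L.Highest χ deg u0) :
    LoopAct (pg.comp deg.ker.subtype) B (L.Lev χ u0 0) where
  X k := LinearMap.mk₂ ℂ (fun p b => (L.X k.1 p b).restrict fun v hv =>
      hH.X_mem_Lev hv p b (by rw [k.2]; rfl))
    (fun _ _ _ => by ext; simp) (fun _ _ _ => by ext; simp) (fun _ _ _ => by ext; simp)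
    (fun _ _ _ => by ext; simp)
  comm r m p q b b' v := by
    ext
    simpa using L.comm r.1 m.1 p q b b' v

@[simp]
lemma coe_topAct_X (hH : L.Highest χ deg u0) (k : deg.ker) (p : P) (b : B)
    (z : L.Lev χ u0 0) : ((hH.topAct.X k p b z : L.Lev χ u0 0) : V) = L.X k.1 p b z := rfl

lemma mem_topAct_Wt (hH : L.Highest χ deg u0) {ψ : P →ₗ[ℂ] ℂ} {z : L.Lev χ u0 0} :
    z ∈ hH.topAct.Wt ψ ↔ (z : V) ∈ L.Wt ψ := by
  simp [mem_Wt, Subtype.ext_iff]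

lemma eq_zero_of_topAct (hH : L.Highest χ deg u0) (C : Set (P × B))
    (hC : ∀ m m' p q b b', (q, b') ∈ C → (pg m p • q - pg m' q • p, b * b') ∈ C)
    (h0 : ∀ k, ∀ c ∈ C, hH.topAct.X k c.1 c.2 = 0) (r : G) {p : P} {b : B} (hc : (p, b) ∈ C) :
    L.X r p b = 0 := by
  refine hH.eq_zero_of_ideal (fun s => {i | ∃ c ∈ C, i = L.X s c.1 c.2}) ?_ ?_ ?_
    ⟨(p, b), hc, rfl⟩
  · rintro r p b s _ ⟨⟨q, b'⟩, hc, rfl⟩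
    refine ⟨_, hC s r p q b b' hc, ?_⟩
    ext v
    simp [L.comm r s p q b b' v]
  · rintro s _ ⟨c, hc, rfl⟩ d v hv
    exact hH.X_mem_Lev hv _ _ rfl
  · rintro s hs _ ⟨c, hc, rfl⟩ v hv
    have := congrArg (fun f => ((f ⟨v, hv⟩ : L.Lev χ u0 0) : V)) (h0 ⟨s, hs⟩ c hc)
    simpa using this

lemma topAct_good (hH : L.Highest χ deg u0) : hH.topAct.Good χ where
  inj m hm := hH.inj m.1 (by simpa using hm)
  irr U hU := by
    by_cases h : U = ⊥
    · exact Or.inl h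
    · refine Or.inr ?_
      have := hH.eq_Lev_of_invariant (U := U.map (L.Lev χ u0 0).subtype)
        (Submodule.map_subtype_le _ _) ?_ ?_
      · refine top_unique fun z _ => ?_
        have hz : (z : V) ∈ U.map (L.Lev χ u0 0).subtype := this.symm ▸ z.2
        obtain ⟨y, hy, hyz⟩ := hz
        rwa [← Subtype.ext hyz]
      · rintro _ ⟨z, hz, rfl⟩ r p b hr
        exact ⟨_, hU ⟨r, hr⟩ p b z hz, rfl⟩
      · intro h0
        refine h (Submodule.map_injective_of_injective
          (Submodule.injective_subtype (L.Lev χ u0 0)) ?_)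
        rw [h0, Submodule.map_bot]
  fin ψ := by
    have := hH.fin ψ
    have h : hH.topAct.Wt ψ = (L.Wt ψ).comap (L.Lev χ u0 0).subtype := by
      ext z; exact hH.mem_topAct_Wt
    rw [h]
    let f : (L.Wt ψ).comap (L.Lev χ u0 0).subtype →ₗ[ℂ] L.Wt ψ :=
      ((L.Lev χ u0 0).subtype).restrict fun z hz => hz
    refine Module.Finite.of_injective f ?_
    intro x y hxy
    have := congrArg Subtype.val hxy
    exact Subtype.ext (Subtype.ext this)
  span := by
    refine top_unique fun z _ => ?_
    have hz : (z : V) ∈ ⨆ x : deg.ker, L.Wt (χ + pg x) := hH.iSup_Wt_eq_Lev.symm ▸ z.2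
    have hz2 : (z : V) ∈ (⨆ x, hH.topAct.Wt (χ + (pg.comp deg.ker.subtype) x)).map
        (L.Lev χ u0 0).subtype := by
      rw [Submodule.map_iSup]
      refine (iSup_mono (f := fun x : deg.ker => L.Wt (χ + pg x)) fun x => ?_ : _ ≤ _) hz
      intro w hw
      have hw' : w ∈ L.Lev χ u0 0 := by
        have := hH.Wt_le_Lev x.1 hw
        rwa [x.2] at this
      exact ⟨⟨w, hw'⟩, hH.mem_topAct_Wt.2 hw, rfl⟩
    obtain ⟨y, hy, hyz⟩ := hz2
    rwa [← Subtype.ext hyz]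
  notriv z hz := by
    by_contra hz0
    let U : Submodule ℂ V := L.Lev χ u0 0 ⊓
      ⨅ k : deg.ker, ⨅ p : P, ⨅ b : B, LinearMap.ker (L.X k.1 p b)
    have hU : ∀ v, v ∈ U ↔ v ∈ L.Lev χ u0 0 ∧ ∀ k ∈ deg.ker, ∀ p b, L.X k p b v = 0 := by
      intro v
      simp only [U, Submodule.mem_inf, Submodule.mem_iInf, LinearMap.mem_ker, Subtype.forall]
    have hzU : (z : V) ∈ U := (hU _).2 ⟨z.2, fun k hk p b => by
      have := congrArg (Subtype.val) (hz ⟨k, hk⟩ p b)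
      simpa using this⟩
    have hUtop := hH.eq_Lev_of_invariant (U := U) inf_le_left ?_ ?_
    · have hz0' : (z : V) ≠ 0 := by simpa using hz0
      refine hz0' (hH.notriv z fun r p b => ?_)
      have := hH.eq_zero_of_topAct Set.univ (fun _ _ _ _ _ _ _ => trivial) ?_ r (p := p) (b := b)
        trivial
      · rw [this]; rfl
      · intro k c _
        ext w
        have hw : (w : V) ∈ U := hUtop.symm ▸ w.2
        simpa using ((hU _).1 hw).2 k.1 k.2 c.1 c.2
    · intro v hv r p b hr
      rw [((hU v).1 hv).2 r hr p b]
      exact U.zero_mem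
    · intro h
      rw [h] at hzU
      exact hz0 (by simpa using hzU)
  nontriv := Submodule.nontrivial_iff_ne_bot.2 hH.Lev_ne_bot

end Highest

variable (L) in
/-- Properties of the action on the top level of a highest weight module: operators of degree
`-1` followed by operators of degree `1` provide finite systems of tests. -/
structure Tested (χ : P →ₗ[ℂ] ℂ) (u0 : P) (γ : P →ₗ[ℂ] ℂ) : Prop extends L.Good χ where
  pg_u0 : ∀ m, pg m u0 = 0
  γ_u0 : γ u0 = 1
  exists_ne : ∃ l : G, l ≠ 0
  tests : ∃ T : Finset (G × P × B), ∀ x b p, ∀ z ∈ L.Wt (χ + pg x),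
    (∀ t ∈ T, L.X (t.1 - x) ((-pg x t.2.1 - γ t.2.1) • p - (γ p + pg t.1 p) • t.2.1)
      (b * t.2.2) z = 0) →
    ∀ k q b', L.X (k - x) ((-pg x q - γ q) • p - (γ p + pg k p) • q) (b * b') z = 0

lemma Highest.topAct_tested (hH : L.Highest χ deg u0) {β e : G} (hβ : deg β = 1)
    (he : e ≠ 0) (hedeg : deg e = 0) : hH.topAct.Tested χ u0 (pg β) where
  toGood := hH.topAct_good
  pg_u0 m := by
    have : deg m.1 = 0 := m.2
    simp [hH.pg_u0, this]
  γ_u0 := by simp [hH.pg_u0, hβ]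
  exists_ne := ⟨⟨e, hedeg⟩, fun h => he (congrArg Subtype.val h)⟩
  tests := by
    classical
    have := hH.fin (χ + pg (-β))
    have hY : L.Wt (χ + pg (-β)) ≤ L.Lev χ u0 (-1) := by
      have := hH.Wt_le_Lev (-β)
      rwa [map_neg deg, hβ] at this
    obtain ⟨T, hT⟩ := exists_finset_separating (L.Wt (χ + pg (-β)))
      (fun t : deg.ker × P × B => L.X (β + t.1.1) t.2.1 t.2.2) (by
        intro y hy h
        refine hH.eq_zero_of_singular (hH.Lev_le_Low (by norm_num) (hY hy)) fun r p b hr => ?_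
        by_cases hr1 : deg r = 1
        · have := h ⟨⟨r - β, by simp [AddMonoidHom.mem_ker, hr1, hβ]⟩, p, b⟩
          simpa using this
        · exact hH.X_eq_zero (hY hy) p b (by omega))
    have comp : ∀ (x k : deg.ker) (p q : P) (b b' : B) (z : L.Lev χ u0 0),
        L.X (β + k.1) q b' (L.X (-β - x.1) p b z) =
          hH.topAct.X (k - x) ((-pg x q - pg β q) • p - (pg β p + pg k p) • q) (b * b') z := by
      intro x k p q b b' z
      rw [L.comm, hH.X_eq_zero z.2 q b' (by rw [map_add, hβ, k.2]; norm_num), map_zero, zero_add,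
        hH.coe_topAct_X, mul_comm]
      have e1 : β + k.1 + (-β - x.1) = (k - x).1 := by
        simp only [AddSubgroup.coe_sub]; abel
      have e2 : (pg (-β - x.1)) q • p - pg (β + k.1) p • q =
          (-pg x q - pg β q) • p - (pg β p + pg k p) • q := by
        rw [map_add, map_sub, map_neg]
        simp only [LinearMap.add_apply, LinearMap.sub_apply, LinearMap.neg_apply]
        module
      rw [e1, e2]
    refine ⟨T, fun x b p z hz hzT => ?_⟩
    have hy : L.X (-β - x.1) p b z = 0 := by
      refine hT _ (X_mem_Wt' (hH.mem_topAct_Wt.1 hz) _ _ (by simp)) fun t ht => ?_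
      rw [comp]
      have := hzT t ht
      simp only [AddMonoidHom.comp_apply, AddSubgroup.subtype_apply] at this
      rw [this]; rfl
    intro k q b'
    have := comp x k p q b b' z
    rw [hy, map_zero] at this
    exact Subtype.ext this.symm

namespace Tested

variable {γ : P →ₗ[ℂ] ℂ}

lemma exists_tests (hT : L.Tested χ u0 γ) : ∃ (T : Finset (G × P × B)) (φ : G → P → P),
    ∀ x b, ∀ z ∈ L.Wt (χ + pg x),
      (∀ t ∈ T, L.X (t.1 - x) (φ x t.2.1) (b * t.2.2) z = 0) →
        ∀ m p b', L.X m p (b * b') z = 0 := by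
  obtain ⟨T, h⟩ := hT.tests
  refine ⟨T, fun x q => (-pg x q - γ q) • u0 - q, fun x b z hz hzT m p b' => ?_⟩
  have key := h x b u0 z hz (fun t ht => by
    simpa [hT.pg_u0, hT.γ_u0] using hzT t ht) (m + x)
  simp only [hT.pg_u0, hT.γ_u0, add_zero, one_smul, add_sub_cancel_right] at key
  have hu : L.X m u0 (b * b') z = 0 := by
    have := key u0 b'
    have e : (-(pg x) u0 - γ u0) • u0 - u0 = (-2 : ℂ) • u0 := by
      rw [hT.pg_u0, hT.γ_u0]; module
    rw [e, map_smul] at this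
    simpa using this
  have := key p b'
  rw [map_sub, map_smul] at this
  simpa [hu] using this

lemma exists_tests_central (hT : L.Tested χ u0 γ) {p : P} (hp : ∀ k, pg k p = 0)
    (hγ : γ p = 0) : ∃ (T : Finset (G × P × B)) (φ : G → P → ℂ),
    ∀ x b, ∀ z ∈ L.Wt (χ + pg x),
      (∀ t ∈ T, L.X (t.1 - x) (φ x t.2.1 • p) (b * t.2.2) z = 0) →
        ∀ m b', L.X m p (b * b') z = 0 := by
  obtain ⟨T, h⟩ := hT.tests
  refine ⟨T, fun x q => -pg x q - γ q, fun x b z hz hzT m b' => ?_⟩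
  have key := h x b p z hz (fun t ht => by
    simpa [hp, hγ] using hzT t ht) (m + x) u0 b'
  simpa [hp, hγ, hT.pg_u0, hT.γ_u0] using key

lemma exists_finrank_le (hT : L.Tested χ u0 γ) : ∃ N, ∀ x, finrank ℂ (L.Wt (χ + pg x)) ≤ N := by
  obtain ⟨T, φ, h⟩ := hT.exists_tests
  have := hT.fin
  refine ⟨∑ t : T, finrank ℂ (L.Wt (χ + pg t.1.1)), fun x => ?_⟩
  by_contra! hlt
  obtain ⟨z, hz, hz0, hzT⟩ := exists_ne_zero_mem_forall_eq_zero (L.Wt (χ + pg x))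
    (fun t : T => L.Wt (χ + pg t.1.1))
    (fun t : T => L.X (t.1.1 - x) (φ x t.1.2.1) (1 * t.1.2.2))
    (fun t z hz => X_mem_Wt' hz _ _ (by abel)) hlt
  refine hz0 (hT.notriv z fun m p b' => ?_)
  simpa using h x 1 z hz (fun t ht => hzT ⟨t, ht⟩) m p b'

end Tested

end LoopAct

end LoopWitt

namespace LoopWitt

lemma mul_pow_succ_of_bracket {E : Type*} [Ring E] {o x d : E} (hxd : Commute x d)
    (ho : o * x = x * o + d) (a : ℕ) :
    o * x ^ (a + 1) = x ^ (a + 1) * o + (a + 1 : ℕ) • (x ^ a * d) := by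
  induction a with
  | zero => simpa using ho
  | succ a ih =>
    rw [pow_succ x (a + 1), ← mul_assoc, ih, add_mul, mul_assoc _ o x, ho, mul_add, smul_mul_assoc,
      mul_assoc _ d x, ← hxd.eq, ← mul_assoc _ x d, ← pow_succ, add_assoc, ← mul_assoc,
      succ_nsmul' _ (a + 1)]

/-- The bracket with an operator preserves nilpotency, among commuting operators. -/
lemma isNilpotent_of_bracket {E : Type*} [Ring E] [Algebra ℂ E] {o x d d' : E}
    (hxd : Commute x d) (hdd : Commute d d') (ho : o * x = x * o + d) (ho' : o * d = d * o + d')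
    (hx : IsNilpotent x) : IsNilpotent d := by
  have step : ∀ a l, x ^ (a + 1) * d ^ (l + 1) = 0 → x ^ a * d ^ (l + 3) = 0 := by
    intro a l h
    have h1 : o * (x ^ (a + 1) * d ^ (l + 1)) = x ^ (a + 1) * d ^ (l + 1) * o +
        (a + 1 : ℕ) • (x ^ a * d ^ (l + 2)) + (l + 1 : ℕ) • (x ^ (a + 1) * d ^ l * d') := by
      rw [← mul_assoc, mul_pow_succ_of_bracket hxd ho, add_mul, mul_assoc _ o,
        mul_pow_succ_of_bracket hdd ho', mul_add, smul_mul_assoc, mul_smul_comm, mul_assoc _ d,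
        ← pow_succ', ← mul_assoc, ← mul_assoc]
      abel
    rw [h, mul_zero, zero_mul, zero_add] at h1
    have h2 := congrArg (d * ·) h1
    simp only [mul_zero, mul_add, mul_smul_comm] at h2
    have e1 : d * (x ^ (a + 1) * d ^ l * d') = 0 := by
      have : d * (x ^ (a + 1) * d ^ l * d') = (x ^ (a + 1) * d ^ (l + 1)) * d' := by
        rw [← mul_assoc, ← mul_assoc, (hxd.symm.pow_right (a + 1)).eq, mul_assoc _ d, ← pow_succ']
      rw [this, h, zero_mul]
    have e2 : d * (x ^ a * d ^ (l + 2)) = x ^ a * d ^ (l + 3) := by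
      rw [← mul_assoc, (hxd.symm.pow_right a).eq, mul_assoc, ← pow_succ']
    rw [e1, smul_zero, add_zero, e2, ← Nat.cast_smul_eq_nsmul ℂ] at h2
    have h3 := congrArg (((a + 1 : ℕ) : ℂ)⁻¹ • ·) h2
    simp only [smul_zero] at h3
    rw [smul_smul, inv_mul_cancel₀ (Nat.cast_ne_zero.2 (Nat.succ_ne_zero a)), one_smul] at h3
    exact h3.symm
  have down : ∀ a l, x ^ a * d ^ (l + 1) = 0 → ∃ m, d ^ m = 0 := by
    intro a
    induction a with
    | zero => intro l h; exact ⟨l + 1, by simpa using h⟩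
    | succ a ih => intro l h; exact ih (l + 2) (step a l h)
  obtain ⟨m, hm⟩ := hx
  exact down m 0 (by rw [hm, zero_mul])

/-- A finite set of commuting nilpotent operators cannot move a vector around forever. -/
lemma eq_zero_of_nilpotent_chain {V : Type*} [AddCommGroup V] [Module ℂ V]
    {F : Set (Module.End ℂ V)} (hF : F.Finite) (hcomm : ∀ f ∈ F, ∀ g ∈ F, f * g = g * f)
    (hnil : ∀ f ∈ F, IsNilpotent f) {Q : Set V} (hQ : ∀ z ∈ Q, ∃ f ∈ F, f z ∈ Q) {z : V}
    (hz : z ∈ Q) : (0 : V) ∈ Q := by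
  let R := Algebra.adjoin ℂ F
  have hc : IsMulCommutative R := Algebra.isMulCommutative_adjoin ℂ hcomm
  let : CommRing R := { (inferInstance : Ring R) with mul_comm := hc.is_comm.comm }
  let F' : Set R := Subtype.val ⁻¹' F
  have hF' : F'.Finite := hF.preimage Subtype.val_injective.injOn
  have hn : IsNilpotent (Ideal.span F') := by
    rw [Ideal.FG.isNilpotent_iff_le_nilradical ⟨hF'.toFinset, by simp⟩, Ideal.span_le]
    intro f hf
    obtain ⟨m, hm⟩ := hnil f.1 hf
    exact ⟨m, Subtype.ext hm⟩
  have chain : ∀ m : ℕ, ∃ j ∈ Ideal.span F' ^ m, j.1 z ∈ Q := by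
    intro m
    induction m with
    | zero => exact ⟨1, by simp, by simpa using hz⟩
    | succ m ih =>
      obtain ⟨j, hj, hjQ⟩ := ih
      obtain ⟨f, hf, hfQ⟩ := hQ _ hjQ
      refine ⟨⟨f, Algebra.subset_adjoin hf⟩ * j, ?_, by simpa using hfQ⟩
      rw [pow_succ']
      exact Ideal.mul_mem_mul (Ideal.subset_span hf) hj
  obtain ⟨m, hm⟩ := hn
  obtain ⟨j, hj, hjQ⟩ := chain m
  rw [hm] at hj
  have : j = 0 := by simpa using hj
  simpa [this] using hjQ

variable {G P B V : Type*} [AddCommGroup G] [AddCommGroup P] [Module ℂ P]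
  [CommRing B] [Algebra ℂ B] [AddCommGroup V] [Module ℂ V]

namespace LoopAct

variable {pg : G →+ (P →ₗ[ℂ] ℂ)} {L : LoopAct pg B V} {χ : P →ₗ[ℂ] ℂ} {u0 : P}
  {γ : P →ₗ[ℂ] ℂ}

variable (L) in
/-- A commutative algebra of operators, stable under brackets with the acting Lie algebra. -/
structure AdStable (R : Subalgebra ℂ (Module.End ℂ V)) : Prop where
  comm : ∀ a ∈ R, ∀ b ∈ R, a * b = b * a
  ad_mem : ∀ m q b, ∀ a ∈ R, L.X m q b * a - a * L.X m q b ∈ R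

lemma adStable_adjoin {F : Set (Module.End ℂ V)} (hcomm : ∀ f ∈ F, ∀ g ∈ F, f * g = g * f)
    (had : ∀ m q b, ∀ f ∈ F, L.X m q b * f - f * L.X m q b ∈ Algebra.adjoin ℂ F) :
    L.AdStable (Algebra.adjoin ℂ F) where
  comm a ha b hb := by
    have := Algebra.isMulCommutative_adjoin ℂ hcomm
    exact congrArg Subtype.val (this.is_comm.comm ⟨a, ha⟩ ⟨b, hb⟩)
  ad_mem m q b a ha := by
    induction ha using Algebra.adjoin_induction with
    | mem f hf => exact had m q b f hf
    | algebraMap c =>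
      rw [Algebra.commutes, sub_self]
      exact Subalgebra.zero_mem _
    | add x y hx hy h1 h2 =>
      have : L.X m q b * (x + y) - (x + y) * L.X m q b =
        (L.X m q b * x - x * L.X m q b) + (L.X m q b * y - y * L.X m q b) := by noncomm_ring
      rw [this]
      exact add_mem h1 h2
    | mul x y hx hy h1 h2 =>
      have : L.X m q b * (x * y) - (x * y) * L.X m q b =
        (L.X m q b * x - x * L.X m q b) * y + x * (L.X m q b * y - y * L.X m q b) := by
        noncomm_ring
      rw [this]
      exact add_mem (mul_mem h1 hy) (mul_mem hx h2)

namespace AdStable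

variable {R : Subalgebra ℂ (Module.End ℂ V)}

lemma isNilpotent_ad (hR : L.AdStable R) {r : Module.End ℂ V} (hr : r ∈ R) (hn : IsNilpotent r)
    (m : G) (q : P) (b : B) : IsNilpotent (L.X m q b * r - r * L.X m q b) := by
  have h1 := hR.ad_mem m q b r hr
  have h2 := hR.ad_mem m q b _ h1
  exact isNilpotent_of_bracket (o := L.X m q b) (hR.comm _ hr _ h1) (hR.comm _ h1 _ h2)
    (by abel) (by abel) hn

/-- Degree zero operators in a stable commutative algebra are scalars plus nilpotents. -/
lemma exists_isNilpotent_sub (hR : L.AdStable R) (hT : L.Tested χ u0 γ) {r : Module.End ℂ V}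
    (hr : r ∈ R) (hdeg : ∀ x, ∀ z ∈ L.Wt (χ + pg x), r z ∈ L.Wt (χ + pg x)) :
    ∃ c : ℂ, IsNilpotent (r - algebraMap ℂ _ c) := by
  obtain ⟨N, hN⟩ := hT.exists_finrank_le
  obtain ⟨x, hx⟩ := hT.exists_wt_ne_bot
  have hfin := hT.fin
  have : Nontrivial (L.Wt (χ + pg x)) := Submodule.nontrivial_iff_ne_bot.2 hx
  obtain ⟨c, hc⟩ := Module.End.exists_eigenvalue (r.restrict (hdeg x))
  obtain ⟨w, hw, hw0⟩ := hc.exists_hasEigenvector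
  have hw1 : r w = c • (w : V) := by
    have := Module.End.mem_eigenspace_iff.1 hw
    simpa using congrArg Subtype.val this
  refine ⟨c, N, ?_⟩
  set s := r - algebraMap ℂ _ c with hs
  have hsR : s ∈ R := sub_mem hr (Subalgebra.algebraMap_mem R c)
  let U : Submodule ℂ V := s.maxGenEigenspace 0
  have hU : ∀ v, v ∈ U ↔ ∃ k : ℕ, (s ^ k) v = 0 := by
    intro v
    simp [U, Module.End.mem_maxGenEigenspace]
  have hUtop : U = ⊤ := by
    refine hT.eq_top_of_mem (v := (w : V)) ?_ ((hU _).2 ⟨1, ?_⟩) (by simpa using hw0)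
    · intro m q b v hv
      obtain ⟨k, hk⟩ := (hU v).1 hv
      refine (hU _).2 ⟨k + 1, ?_⟩
      have h1 := hR.ad_mem m q b s hsR
      have h2 := mul_pow_succ_of_bracket (o := L.X m q b) (x := s) (hR.comm _ hsR _ h1)
        (by abel) k
      have h3 := congrArg (fun f : Module.End ℂ V => f v) h2
      have h4 : s ^ k * (L.X m q b * s - s * L.X m q b) =
          (L.X m q b * s - s * L.X m q b) * s ^ k :=
        hR.comm _ (pow_mem hsR k) _ h1
      rw [h4] at h3
      simp only [Module.End.mul_apply, LinearMap.add_apply, LinearMap.smul_apply, hk, map_zero,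
        smul_zero, add_zero] at h3
      rw [← h3, pow_succ', Module.End.mul_apply, hk, map_zero, map_zero]
    · simp [hs, hw1, Algebra.algebraMap_eq_smul_one]
  have hker : LinearMap.ker (s ^ N) = ⊤ := by
    refine hT.top_le fun y z hz => ?_
    have hmaps : ∀ z ∈ L.Wt (χ + pg y), s z ∈ L.Wt (χ + pg y) := by
      intro z hz
      have : s z = r z - c • z := by simp [hs, Algebra.algebraMap_eq_smul_one]
      rw [this]
      exact Submodule.sub_mem _ (hdeg y z hz) (Submodule.smul_mem _ _ hz)
    have hpow : ∀ k (z : L.Wt (χ + pg y)), (((s.restrict hmaps) ^ k) z : V) = (s ^ k) z := by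
      intro k z
      rw [Module.End.pow_restrict]
      rfl
    have hnil : IsNilpotent (s.restrict hmaps) := by
      rw [Module.End.isNilpotent_iff_of_finite]
      intro z
      obtain ⟨k, hk⟩ := (hU z.1).1 (hUtop ▸ Submodule.mem_top)
      exact ⟨k, Subtype.ext (by rw [hpow, hk]; rfl)⟩
    have h1 := LinearMap.aeval_self_charpoly (s.restrict hmaps)
    have hc : (s.restrict hmaps).charpoly = Polynomial.X ^ finrank ℂ (L.Wt (χ + pg y)) :=
      ((LinearMap.charpoly_nilpotent_tfae (s.restrict hmaps)).out 0 1).1 hnil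
    rw [hc, map_pow, Polynomial.aeval_X] at h1
    have h2 : (s ^ finrank ℂ (L.Wt (χ + pg y))) z = 0 := by
      rw [← hpow _ ⟨z, hz⟩, h1]; rfl
    rw [LinearMap.mem_ker, ← Nat.sub_add_cancel (hN y), pow_add, Module.End.mul_apply, h2,
      map_zero]
  exact LinearMap.ker_eq_top.1 hker

end AdStable

/-- Systems of tests by commuting nilpotent operators do not exist. -/
lemma Good.not_nilpotent_tests (hL : L.Good χ) {ι : Type*} (T : Finset ι) (d : ι → G)
    (Y : G → ι → Module.End ℂ V)
    (hY : ∀ x t, ∀ z ∈ L.Wt (χ + pg x), Y x t z ∈ L.Wt (χ + pg (d t)))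
    (hcomm : ∀ x t x' t', Y x t * Y x' t' = Y x' t' * Y x t)
    (hnil : ∀ x t, IsNilpotent (Y x t))
    (h0 : ∀ x, ∀ z ∈ L.Wt (χ + pg x), (∀ t ∈ T, Y x t z = 0) → z = 0) : False := by
  obtain ⟨x, hx⟩ := hL.exists_wt_ne_bot
  obtain ⟨z, hz, hz0⟩ := Submodule.exists_mem_ne_zero_of_ne_bot hx
  have step : ∀ x, ∀ z ∈ L.Wt (χ + pg x), z ≠ 0 → ∃ t ∈ T, Y x t z ≠ 0 := by
    intro x z hz hz0
    by_contra! h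
    exact hz0 (h0 x z hz h)
  let Q : Set V := {z | z ≠ 0 ∧ ∃ t ∈ T, z ∈ L.Wt (χ + pg (d t))}
  let F : Set (Module.End ℂ V) := (fun p : ι × ι => Y (d p.1) p.2) '' (T ×ˢ T : Finset (ι × ι))
  have hF : F.Finite := (Finset.finite_toSet _).image _
  obtain ⟨t, ht, htz⟩ := step x z hz hz0
  have := eq_zero_of_nilpotent_chain hF (Q := Q) (z := Y x t z) ?_ ?_ ?_
    ⟨htz, t, ht, hY x t z hz⟩
  · exact this.1 rfl
  · rintro _ ⟨p, _, rfl⟩ _ ⟨p', _, rfl⟩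
    exact hcomm _ _ _ _
  · rintro _ ⟨p, _, rfl⟩
    exact hnil _ _
  · rintro z ⟨hz0, t, ht, hz⟩
    obtain ⟨t', ht', h⟩ := step _ z hz hz0
    exact ⟨Y (d t) t', ⟨(t, t'), by simp [ht, ht'], rfl⟩, h, t', ht', hY _ _ z hz⟩

end LoopAct

end LoopWitt

namespace LoopWitt

variable {G P B V : Type*} [AddCommGroup G] [AddCommGroup P] [Module ℂ P]
  [CommRing B] [Algebra ℂ B] [AddCommGroup V] [Module ℂ V]

/-- A reduced finite dimensional complex algebra without nontrivial idempotents is `ℂ`. -/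
lemma exists_algHom_injective {A : Type*} [CommRing A] [Algebra ℂ A] [Nontrivial A]
    [FiniteDimensional ℂ A] (hred : ∀ a : A, a ^ 2 = 0 → a = 0)
    (hid : ∀ e : A, e ^ 2 = e → e = 0 ∨ e = 1) :
    ∃ η : A →ₐ[ℂ] ℂ, Function.Injective η := by
  have hnil : ∀ (a : A) (n : ℕ), a ^ n = 0 → a = 0 := by
    have : IsReduced A := by
      refine (isReduced_iff_pow_one_lt 2 one_lt_two).2 hred
    exact fun a n h => eq_zero_of_pow_eq_zero h
  have hunit : ∀ a : A, a ≠ 0 → IsUnit a := by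
    intro a ha
    have : IsArtinianRing A := IsArtinianRing.of_finite ℂ A
    obtain ⟨n, y, hy⟩ := IsArtinian.exists_pow_succ_smul_dvd a (1 : A)
    simp only [smul_eq_mul, mul_one] at hy
    have h1 : ∀ k, a ^ n * (a * y) ^ k = a ^ n := by
      intro k
      induction k with
      | zero => simp
      | succ k ih =>
        rw [pow_succ, ← mul_assoc, ih, ← mul_assoc, ← pow_succ, hy]
    have h2 : ((a * y) ^ n) ^ 2 = (a * y) ^ n := by
      calc ((a * y) ^ n) ^ 2 = (a ^ n * (a * y) ^ n) * y ^ n := by ring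
        _ = (a * y) ^ n := by rw [h1, mul_pow]
    rcases hid _ h2 with h | h
    · exact absurd (hnil a n (by rw [← h1 n, h, mul_zero])) ha
    · rcases Nat.eq_zero_or_pos n with h0 | h0
      · subst h0
        exact IsUnit.of_mul_eq_one y (by simpa using hy)
      · exact isUnit_of_mul_isUnit_left
          ((isUnit_pow_iff h0.ne').1 (h ▸ isUnit_one : IsUnit ((a * y) ^ n)))
  have : NoZeroDivisors A := ⟨fun {a b} hab => by
    by_cases ha : a = 0
    · exact Or.inl ha
    · exact Or.inr ((hunit a ha).mul_right_eq_zero.1 hab)⟩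
  have : IsDomain A := NoZeroDivisors.to_isDomain A
  have hb := IsAlgClosed.algebraMap_bijective_of_isIntegral (k := ℂ) (K := A)
  let e : ℂ ≃ₐ[ℂ] A := AlgEquiv.ofBijective (Algebra.ofId ℂ A) hb
  exact ⟨e.symm, e.symm.injective⟩

namespace LoopAct

variable {pg : G →+ (P →ₗ[ℂ] ℂ)} {L : LoopAct pg B V} {χ : P →ₗ[ℂ] ℂ} {u0 : P}
  {γ : P →ₗ[ℂ] ℂ}

lemma X_bracket (m k : G) (q p : P) (c b : B) :
    L.X m q c * L.X k p b - L.X k p b * L.X m q c =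
      L.X (m + k) (pg k q • p - pg m p • q) (c * b) := by
  ext v
  simp [L.comm m k q p c b v]

variable (L) in
/-- The ideal of coefficients acting by zero. -/
def Ann : Ideal B where
  carrier := {b | ∀ b' k p, L.X k p (b * b') = 0}
  add_mem' := by
    intro a b ha hb b' k p
    rw [add_mul, map_add, ha, hb, add_zero]
  zero_mem' := by intro b' k p; simp
  smul_mem' := by
    intro c b hb b' k p
    rw [smul_eq_mul, mul_comm c, mul_assoc]
    exact hb _ _ _

lemma X_eq_zero_of_mem_Ann {b : B} (hb : b ∈ L.Ann) (k : G) (p : P) : L.X k p b = 0 := by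
  simpa using hb 1 k p

lemma Good.mem_Ann_of_vector (hL : L.Good χ) {b : B} {z : V} (hz0 : z ≠ 0)
    (hz : ∀ m p b', L.X m p (b * b') z = 0) : b ∈ L.Ann := by
  let U : Submodule ℂ V := ⨅ m : G, ⨅ p : P, ⨅ b' : B, LinearMap.ker (L.X m p (b * b'))
  have hU : ∀ v, v ∈ U ↔ ∀ m p b', L.X m p (b * b') v = 0 := by
    intro v; simp [U, Submodule.mem_iInf]
  have hinv : L.Inv U := by
    intro r q c v hv
    rw [hU] at hv ⊢
    intro m p b'
    rw [L.comm, hv, map_zero, zero_add, mul_assoc, hv]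
  have htop := hL.eq_top_of_mem hinv ((hU z).2 hz) hz0
  intro b' k p
  ext v
  exact (hU v).1 (htop ▸ Submodule.mem_top) k p b'

lemma Good.one_notMem_Ann (hL : L.Good χ) : (1 : B) ∉ L.Ann := by
  intro h
  have := hL.nontriv
  obtain ⟨v, hv⟩ := exists_ne (0 : V)
  refine hv (hL.notriv v fun r p b => ?_)
  have := h b r p
  rw [one_mul] at this
  rw [this]; rfl

namespace Tested

lemma finite_quotient_Ann (hT : L.Tested χ u0 γ) : FiniteDimensional ℂ (B ⧸ L.Ann) := by
  obtain ⟨T, φ, h⟩ := hT.exists_tests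
  obtain ⟨x, hx⟩ := hT.exists_wt_ne_bot
  obtain ⟨z, hz, hz0⟩ := Submodule.exists_mem_ne_zero_of_ne_bot hx
  have := hT.fin
  let f : B →ₗ[ℂ] (∀ t : T, L.Wt (χ + pg t.1.1)) := LinearMap.pi fun t =>
    LinearMap.codRestrict _
      ((LinearMap.applyₗ z).comp ((L.X (t.1.1 - x) (φ x t.1.2.1)).comp
        (LinearMap.mulRight ℂ t.1.2.2)))
      (fun b => X_mem_Wt' hz _ _ (by abel))
  have hf : LinearMap.ker f ≤ LinearMap.ker (Ideal.Quotient.mkₐ ℂ L.Ann).toLinearMap := by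
    intro b hb
    have hb' : b ∈ L.Ann := by
      refine hT.mem_Ann_of_vector hz0 (h x b z hz fun t ht => ?_)
      have := congrArg Subtype.val (congrFun (LinearMap.mem_ker.1 hb) ⟨t, ht⟩)
      exact this
    simpa [LinearMap.mem_ker, Ideal.Quotient.eq_zero_iff_mem] using hb'
  have : FiniteDimensional ℂ (B ⧸ LinearMap.ker f) :=
    Module.Finite.equiv f.quotKerEquivRange.symm
  refine Module.Finite.of_surjective ((LinearMap.ker f).liftQ _ hf) ?_
  intro a
  obtain ⟨b, rfl⟩ := Ideal.Quotient.mk_surjective a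
  exact ⟨Submodule.Quotient.mk b, by simp⟩

lemma mem_Ann_of_sq_mem (hT : L.Tested χ u0 γ) {a : B} (ha : a ^ 2 ∈ L.Ann) : a ∈ L.Ann := by
  by_contra haA
  let F : Set (Module.End ℂ V) := {f | ∃ k p b, f = L.X k p (a * b)}
  have hF : ∀ k p b, L.X k p (a * b) ∈ Algebra.adjoin ℂ F :=
    fun k p b => Algebra.subset_adjoin ⟨k, p, b, rfl⟩
  have hFc : ∀ f ∈ F, ∀ g ∈ F, f * g = g * f := by
    rintro _ ⟨k, p, b, rfl⟩ _ ⟨k', p', b', rfl⟩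
    rw [← sub_eq_zero, X_bracket, show a * b * (a * b') = a ^ 2 * (b * b') by ring]
    exact ha _ _ _
  have hR : L.AdStable (Algebra.adjoin ℂ F) := by
    refine adStable_adjoin hFc ?_
    rintro m q c _ ⟨k, p, b, rfl⟩
    rw [X_bracket, mul_left_comm]
    exact hF _ _ _
  have hne : ∀ l, l ≠ 0 → ∀ q b, IsNilpotent (L.X l q (a * b)) := by
    intro l hl q b
    obtain ⟨p, hp⟩ := hT.inj l hl
    obtain ⟨c, hc⟩ := hR.exists_isNilpotent_sub hT (hF 0 p b)
      (fun x z hz => X_mem_Wt' hz _ _ (by simp))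
    have h := hR.isNilpotent_ad (sub_mem (hF 0 p b) (Subalgebra.algebraMap_mem _ c)) hc l q 1
    have e : L.X l q 1 * (L.X 0 p (a * b) - algebraMap ℂ _ c) -
        (L.X 0 p (a * b) - algebraMap ℂ _ c) * L.X l q 1 = (-pg l p) • L.X l q (a * b) := by
      rw [mul_sub, sub_mul, Algebra.commutes, sub_sub_sub_cancel_right, X_bracket]
      simp
    rw [e] at h
    have h2 := h.smul (-pg l p)⁻¹
    rwa [smul_smul, inv_mul_cancel₀ (neg_ne_zero.2 hp), one_smul] at h2
  obtain ⟨l, hl⟩ := hT.exists_ne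
  have hzero' : ∀ p, pg l p ≠ 0 → ∀ b, IsNilpotent (L.X 0 p (a * b)) := by
    intro p hp b
    have h := hR.isNilpotent_ad (hF l p b) (hne l hl p b) (-l) p 1
    have e : L.X (-l) p 1 * L.X l p (a * b) - L.X l p (a * b) * L.X (-l) p 1 =
        (2 * pg l p) • L.X 0 p (a * b) := by
      rw [X_bracket, ← sub_smul, one_mul, neg_add_cancel, map_neg, LinearMap.neg_apply,
        sub_neg_eq_add, ← two_mul]
      simp
    rw [e] at h
    have h2 := h.smul (2 * pg l p)⁻¹
    rwa [smul_smul, inv_mul_cancel₀ (mul_ne_zero two_ne_zero hp), one_smul] at h2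
  have hzero : ∀ p b, IsNilpotent (L.X 0 p (a * b)) := by
    intro p b
    by_cases hp : pg l p = 0
    · obtain ⟨p', hp'⟩ := hT.inj l hl
      have e : L.X 0 p (a * b) = L.X 0 (p + p') (a * b) - L.X 0 p' (a * b) := by simp
      rw [e]
      refine Commute.isNilpotent_sub (hR.comm _ (hF _ _ _) _ (hF _ _ _))
        (hzero' _ (by simpa [hp] using hp') b) (hzero' _ hp' b)
    · exact hzero' p hp b
  obtain ⟨T, φ, h⟩ := hT.exists_tests
  refine hT.not_nilpotent_tests T (fun t => t.1)
    (fun x t => L.X (t.1 - x) (φ x t.2.1) (a * t.2.2)) ?_ ?_ ?_ ?_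
  · exact fun x t z hz => X_mem_Wt' hz _ _ (by abel)
  · exact fun x t x' t' => hFc _ ⟨_, _, _, rfl⟩ _ ⟨_, _, _, rfl⟩
  · intro x t
    by_cases ht : t.1 - x = 0
    · rw [ht]; exact hzero _ _
    · exact hne _ ht _ _
  · intro x z hz hzT
    by_contra hz0
    exact haA (hT.mem_Ann_of_vector hz0 (h x a z hz hzT))

end Tested

end LoopAct

end LoopWitt

namespace LoopWitt

variable {G P B V : Type*} [AddCommGroup G] [AddCommGroup P] [Module ℂ P]
  [CommRing B] [Algebra ℂ B] [AddCommGroup V] [Module ℂ V]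

lemma aeval_apply_of_intertwines {V' : Type*} [AddCommGroup V'] [Module ℂ V']
    {h : Module.End ℂ V} {h' : Module.End ℂ V'} {D : V' →ₗ[ℂ] V}
    (H : ∀ v, h (D v) = D (h' v)) (p : Polynomial ℂ) :
    ∀ v, Polynomial.aeval h p (D v) = D (Polynomial.aeval h' p v) := by
  induction p using Polynomial.induction_on' with
  | add p q hp hq => intro v; simp [hp, hq]
  | monomial m a =>
    have hpow : ∀ v, (h ^ m) (D v) = D ((h' ^ m) v) := by
      induction m with
      | zero => simp
      | succ m ih => intro v; rw [pow_succ, pow_succ]; simp [H, ih]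
    intro v
    simp [Polynomial.aeval_monomial, hpow, Algebra.algebraMap_eq_smul_one]

/-- An operator shifting the spectrum of an algebraic operator off itself is zero. -/
lemma exists_finset_shift_eq_zero {h : Module.End ℂ V} {p : Polynomial ℂ} (hp : p ≠ 0)
    (hh : Polynomial.aeval h p = 0) :
    ∃ Z : Finset ℂ, ∀ c ∉ Z, ∀ D : Module.End ℂ V, (∀ v, h (D v) = D (h v + c • v)) → D = 0 := by
  classical
  refine ⟨(p.roots.toFinset ×ˢ p.roots.toFinset).image fun a => a.1 - a.2, ?_⟩
  intro c hc D hD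
  have hco : IsCoprime p (p.comp (Polynomial.X + Polynomial.C c)) := by
    rw [Polynomial.isCoprime_iff_aeval_ne_zero_of_isAlgClosed ℂ ℂ]
    intro a
    by_contra! ha
    refine hc (Finset.mem_image.2 ⟨(a + c, a), ?_, by simp⟩)
    have h1 := ha.1
    have h2 := ha.2
    simp only [Polynomial.coe_aeval_eq_eval, Polynomial.eval_comp, Polynomial.eval_add,
      Polynomial.eval_X, Polynomial.eval_C] at h1 h2
    simp [hp, h1, h2]
  have hD' : ∀ v, D (Polynomial.aeval h (p.comp (Polynomial.X + Polynomial.C c)) v) = 0 := by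
    intro v
    rw [Polynomial.aeval_comp, ← aeval_apply_of_intertwines (h := h), hh, LinearMap.zero_apply]
    intro w
    rw [hD]
    simp [Algebra.algebraMap_eq_smul_one]
  obtain ⟨a, b, hab⟩ := hco
  ext v
  have h1 := congrArg (fun q => Polynomial.aeval h q v) hab
  simp only [map_one, Module.End.one_apply, mul_comm a, mul_comm b, map_add, map_mul, hh,
    zero_mul, zero_add, Module.End.mul_apply] at h1
  rw [← h1, hD', LinearMap.zero_apply]

namespace LoopAct

variable {pg : G →+ (P →ₗ[ℂ] ℂ)} {L : LoopAct pg B V} {χ : P →ₗ[ℂ] ℂ} {u0 : P}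
  {γ : P →ₗ[ℂ] ℂ}

lemma X_congr {b c : B} (h : b - c ∈ L.Ann) (k : G) (p : P) : L.X k p b = L.X k p c := by
  rw [← sub_eq_zero, ← map_sub]
  exact X_eq_zero_of_mem_Ann h k p

namespace Tested

/-- An operator of degree zero commuting with all `X m p (e * b)` is algebraic. -/
lemma exists_aeval_eq_zero (hT : L.Tested χ u0 γ) {e : B} (he : e ∉ L.Ann)
    {h : Module.End ℂ V} (hdeg : ∀ x, ∀ z ∈ L.Wt (χ + pg x), h z ∈ L.Wt (χ + pg x))
    (hcomm : ∀ m p b v, h (L.X m p (e * b) v) = L.X m p (e * b) (h v)) :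
    ∃ p : Polynomial ℂ, p ≠ 0 ∧ Polynomial.aeval h p = 0 := by
  obtain ⟨T, φ, ht⟩ := hT.exists_tests
  have := hT.fin
  obtain ⟨M, hMT, hMfin, hM⟩ : ∃ M : Submodule ℂ V, (∀ t ∈ T, L.Wt (χ + pg t.1) ≤ M) ∧
      FiniteDimensional ℂ M ∧ ∀ v ∈ M, h v ∈ M := by
    refine ⟨⨆ t : T, L.Wt (χ + pg t.1.1),
      fun t ht => le_iSup (fun t : T => L.Wt (χ + pg t.1.1)) ⟨t, ht⟩,
      Submodule.finiteDimensional_iSup _, ?_⟩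
    have : (⨆ t : T, L.Wt (χ + pg t.1.1)) ≤ (⨆ t : T, L.Wt (χ + pg t.1.1)).comap h :=
      iSup_le fun t v hv => le_iSup (fun t : T => L.Wt (χ + pg t.1.1)) t (hdeg _ v hv)
    exact this
  let p := (h.restrict hM).charpoly
  have hp : ∀ v ∈ M, Polynomial.aeval h p v = 0 := by
    intro v hv
    have h1 := aeval_apply_of_intertwines (h := h) (h' := h.restrict hM) (D := M.subtype)
      (fun v => rfl) p ⟨v, hv⟩
    rw [LinearMap.aeval_self_charpoly] at h1
    simpa using h1
  refine ⟨p, (LinearMap.charpoly_monic _).ne_zero, LinearMap.ker_eq_top.1 ?_⟩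
  refine hT.top_le fun x z hz => ?_
  rw [LinearMap.mem_ker]
  by_contra hne
  refine he (hT.mem_Ann_of_vector hne (ht x e _ ?_ ?_))
  · have h1 := aeval_apply_of_intertwines (h := h) (h' := h.restrict (hdeg x))
      (D := (L.Wt (χ + pg x)).subtype) (fun v => rfl) p ⟨z, hz⟩
    rw [Submodule.subtype_apply] at h1
    rw [h1]
    exact Submodule.coe_mem _
  · intro t htT
    rw [← aeval_apply_of_intertwines (h := h) (hcomm _ _ _)]
    exact hp _ (hMT t htT (X_mem_Wt' hz _ _ (by abel)))

lemma one_sub_mem_Ann (hT : L.Tested χ u0 γ) {e : B} (hidem : e ^ 2 - e ∈ L.Ann)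
    (he : e ∉ L.Ann) : 1 - e ∈ L.Ann := by
  obtain ⟨l0, hl0⟩ := hT.exists_ne
  obtain ⟨u, hu⟩ := hT.inj l0 hl0
  obtain ⟨q, hq0, hq⟩ := hT.exists_aeval_eq_zero he (h := L.X 0 u (1 - e))
    (fun x z hz => X_mem_Wt' hz _ _ (by simp)) (by
      intro m p b v
      rw [L.comm]
      have h0 : (1 - e) * (e * b) ∈ L.Ann := by
        have := L.Ann.mul_mem_left (-b) hidem
        have e1 : (1 - e) * (e * b) = -b * (e ^ 2 - e) := by ring
        rwa [e1]
      rw [X_eq_zero_of_mem_Ann h0]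
      simp)
  obtain ⟨Z, hZ⟩ := exists_finset_shift_eq_zero hq0 hq
  have key : ∀ l, pg l u ∉ Z → ∀ p b, L.X l p ((1 - e) * b) = 0 := by
    intro l hl p b
    refine hZ _ hl _ fun v => ?_
    have h0 : (1 - e) * ((1 - e) * b) - (1 - e) * b ∈ L.Ann := by
      have := L.Ann.mul_mem_left b hidem
      have e1 : (1 - e) * ((1 - e) * b) - (1 - e) * b = b * (e ^ 2 - e) := by ring
      rwa [e1]
    rw [L.comm, X_congr h0]
    simp
  intro b k p
  obtain ⟨m, hm⟩ : ∃ m : ℕ, (m : ℂ) * pg l0 u ∉ insert (pg k u / 2) Z := by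
    have hinj : Function.Injective fun m : ℕ => (m : ℂ) * pg l0 u := fun a b hab =>
      Nat.cast_injective (mul_right_cancel₀ hu hab)
    obtain ⟨_, ⟨m, rfl⟩, hm⟩ :=
      (Set.infinite_range_of_injective hinj).exists_notMem_finset (insert (pg k u / 2) Z)
    exact ⟨m, hm⟩
  have hl : pg (m • l0) u = m * pg l0 u := by simp
  rw [← hl, Finset.mem_insert, not_or] at hm
  have hbr : ∀ p, pg (k - m • l0) p - pg (m • l0) p ≠ 0 → L.X k p ((1 - e) * b) = 0 := by
    intro p hp
    have h1 := L.X_bracket (m • l0) (k - m • l0) p p ((1 - e) * b) 1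
    rw [key _ hm.2, zero_mul, mul_zero, sub_zero, ← sub_smul, map_smul, LinearMap.smul_apply,
      mul_one, add_sub_cancel] at h1
    exact (smul_eq_zero.1 h1.symm).resolve_left hp
  have hu' : pg (k - m • l0) u - pg (m • l0) u ≠ 0 := by
    intro h0
    refine hm.1 ?_
    rw [map_sub, LinearMap.sub_apply] at h0
    linear_combination -h0 / 2
  by_cases hp : pg (k - m • l0) p - pg (m • l0) p = 0
  · have h1 := hbr (p + u) (by
      rw [map_add, map_add, add_sub_add_comm, hp, zero_add]; exact hu')
    rwa [map_add, LinearMap.add_apply, hbr u hu', add_zero] at h1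
  · exact hbr p hp

/-- The coefficients act through a character of `B`. -/
lemma exists_algHom (hT : L.Tested χ u0 γ) :
    ∃ η : B →ₐ[ℂ] ℂ, ∀ b, η b = 0 → b ∈ L.Ann := by
  have := hT.finite_quotient_Ann
  have : Nontrivial (B ⧸ L.Ann) := Ideal.Quotient.nontrivial_iff.2
    ((Ideal.ne_top_iff_one _).2 hT.one_notMem_Ann)
  obtain ⟨η, hη⟩ := exists_algHom_injective (A := B ⧸ L.Ann) (by
      intro a ha
      obtain ⟨b, rfl⟩ := Ideal.Quotient.mk_surjective a
      rw [← map_pow, Ideal.Quotient.eq_zero_iff_mem] at ha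
      exact Ideal.Quotient.eq_zero_iff_mem.2 (hT.mem_Ann_of_sq_mem ha)) (by
      intro a ha
      obtain ⟨b, rfl⟩ := Ideal.Quotient.mk_surjective a
      rw [← map_pow, Ideal.Quotient.eq] at ha
      by_cases hb : b ∈ L.Ann
      · exact Or.inl (Ideal.Quotient.eq_zero_iff_mem.2 hb)
      · refine Or.inr (Eq.symm ?_)
        rw [← map_one (Ideal.Quotient.mk L.Ann), Ideal.Quotient.eq]
        exact hT.one_sub_mem_Ann ha hb)
  refine ⟨η.comp (Ideal.Quotient.mkₐ ℂ L.Ann), fun b hb => ?_⟩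
  have h1 : η (Ideal.Quotient.mk L.Ann b) = 0 := hb
  exact Ideal.Quotient.eq_zero_iff_mem.1 ((map_eq_zero_iff η hη).1 h1)

/-- A central parameter acting by zero in degree zero acts by zero. -/
lemma X_eq_zero_of_central (hT : L.Tested χ u0 γ) {η : B →ₐ[ℂ] ℂ}
    (hη : ∀ b, η b = 0 → b ∈ L.Ann) {p : P} (hp : ∀ k, pg k p = 0) (hγ : γ p = 0)
    (hχ : χ p = 0) (k : G) (b : B) : L.X k p b = 0 := by
  have hev : ∀ k b, L.X k p b = η b • L.X k p 1 := by
    intro k b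
    rw [← LinearMap.map_smul]
    refine X_congr (hη _ ?_) k p
    simp
  let U : Submodule ℂ V := ⨅ m : G, LinearMap.ker (L.X m p 1)
  have hU : ∀ v, v ∈ U ↔ ∀ m, L.X m p 1 v = 0 := by
    intro v; simp [U, Submodule.mem_iInf]
  have hinv : L.Inv U := by
    intro r q c v hv
    rw [hU] at hv ⊢
    intro m
    rw [L.comm, hv, map_zero, zero_add, hp, zero_smul, zero_sub, one_mul, map_neg, map_smul,
      LinearMap.neg_apply, LinearMap.smul_apply, hev]
    simp [hv]
  rcases hT.irr U hinv with hbot | htop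
  swap
  · rw [hev]
    ext v
    simp [(hU v).1 (htop ▸ Submodule.mem_top) k]
  exfalso
  let F : Set (Module.End ℂ V) := {f | ∃ k, f = L.X k p 1}
  have hF : ∀ k, L.X k p 1 ∈ Algebra.adjoin ℂ F := fun k => Algebra.subset_adjoin ⟨k, rfl⟩
  have hFc : ∀ f ∈ F, ∀ g ∈ F, f * g = g * f := by
    rintro _ ⟨k, rfl⟩ _ ⟨k', rfl⟩
    rw [← sub_eq_zero, X_bracket]
    simp [hp]
  have had : ∀ m q k, L.X m q 1 * L.X k p 1 - L.X k p 1 * L.X m q 1 =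
      pg k q • L.X (m + k) p 1 := by
    intro m q k
    rw [X_bracket]
    simp [hp]
  have hR : L.AdStable (Algebra.adjoin ℂ F) := by
    refine adStable_adjoin hFc ?_
    rintro m q c _ ⟨k, rfl⟩
    rw [X_bracket, hp, zero_smul, sub_zero, map_smul, LinearMap.smul_apply, hev]
    exact Subalgebra.smul_mem _ (Subalgebra.smul_mem _ (hF _) _) _
  have hzero : L.X 0 p 1 = 0 := by
    refine LinearMap.ker_eq_top.1 (hT.top_le fun x z hz => ?_)
    rw [LinearMap.mem_ker, mem_Wt.1 hz p]
    simp [hp, hχ]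
  have hprod : ∀ m q k k', L.X m q 1 * (L.X k p 1 * L.X k' p 1) -
      L.X k p 1 * L.X k' p 1 * L.X m q 1 =
      pg k q • (L.X (m + k) p 1 * L.X k' p 1) + pg k' q • (L.X k p 1 * L.X (m + k') p 1) := by
    intro m q k k'
    rw [← smul_mul_assoc, ← mul_smul_comm, ← had, ← had]
    noncomm_ring
  have hnil : ∀ k, IsNilpotent (L.X k p 1) := by
    intro k
    by_cases hk : k = 0
    · rw [hk, hzero]; exact IsNilpotent.zero
    obtain ⟨v, hv⟩ : ∃ v, pg k v = 1 := by
      obtain ⟨v, hv⟩ := hT.inj k hk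
      exact ⟨(pg k v)⁻¹ • v, by simp [hv]⟩
    have hmem : L.X k p 1 * L.X (-k) p 1 ∈ Algebra.adjoin ℂ F := mul_mem (hF _) (hF _)
    obtain ⟨c, hc⟩ := hR.exists_isNilpotent_sub hT hmem (by
      intro x z hz
      exact X_mem_Wt' (X_mem_Wt' hz p 1 rfl) p 1 (by abel))
    have hcm := sub_mem hmem (Subalgebra.algebraMap_mem (Algebra.adjoin ℂ F) c)
    have hsub : ∀ m q, L.X m q 1 * (L.X k p 1 * L.X (-k) p 1 - algebraMap ℂ _ c) -
        (L.X k p 1 * L.X (-k) p 1 - algebraMap ℂ _ c) * L.X m q 1 =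
        pg k q • (L.X (m + k) p 1 * L.X (-k) p 1) -
          pg k q • (L.X k p 1 * L.X (m - k) p 1) := by
      intro m q
      rw [mul_sub, sub_mul, Algebra.commutes, sub_sub_sub_cancel_right, hprod]
      simp [sub_eq_add_neg]
    have h2 := hR.isNilpotent_ad hcm hc k v 1
    rw [hsub, hv, sub_self, hzero, mul_zero, smul_zero, sub_zero, one_smul] at h2
    have h3 := hR.isNilpotent_ad (mul_mem (hF (k + k)) (hF (-k))) h2 k v 1
    rw [hprod, add_neg_cancel, hzero, mul_zero, smul_zero, add_zero] at h3
    have h4 := hR.isNilpotent_ad hcm hc (k + k) v 1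
    rw [hsub, hv, one_smul, one_smul, add_sub_cancel_right] at h4
    have h5 : IsNilpotent (L.X (k + k + k) p 1 * L.X (-k) p 1) := by
      have := h3.smul (pg (k + k) v)⁻¹
      rwa [smul_smul, inv_mul_cancel₀ (by simp [hv, ← two_mul]), one_smul, ← add_assoc] at this
    have h6 := Commute.isNilpotent_sub (hR.comm _ (mul_mem (hF _) (hF _)) _
      (sub_mem (mul_mem (hF _) (hF _)) (mul_mem (hF _) (hF _)))) h5 h4
    rw [sub_sub_cancel, ← pow_two] at h6
    exact (IsNilpotent.pow_iff_pos two_ne_zero).1 h6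
  obtain ⟨T, φ, h⟩ := hT.exists_tests_central hp hγ
  refine hT.not_nilpotent_tests T (fun t => t.1)
    (fun x t => L.X (t.1 - x) (φ x t.2.1 • p) (1 * t.2.2)) ?_ ?_ ?_ ?_
  · exact fun x t z hz => X_mem_Wt' hz _ _ (by abel)
  · intro x t x' t'
    have hmem : ∀ k (a : ℂ) b, L.X k (a • p) b ∈ Algebra.adjoin ℂ F := by
      intro k a b
      rw [map_smul, LinearMap.smul_apply, hev]
      exact Subalgebra.smul_mem _ (Subalgebra.smul_mem _ (hF _) _) _
    exact hR.comm _ (hmem _ _ _) _ (hmem _ _ _)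
  · intro x t
    rw [map_smul, LinearMap.smul_apply, hev]
    exact ((hnil _).smul _).smul _
  · intro x z hz hzT
    have := h x 1 z hz hzT
    have hzU : z ∈ U := (hU z).2 fun m => by simpa using this m 1
    rw [hbot] at hzU
    simpa using hzU

end Tested

end LoopAct

end LoopWitt

namespace LoopWitt

namespace LoopAct

variable {G P B V : Type*} [AddCommGroup G] [AddCommGroup P] [Module ℂ P]
  [CommRing B] [Algebra ℂ B] [AddCommGroup V] [Module ℂ V]
  {pg : G →+ (P →ₗ[ℂ] ℂ)} {L : LoopAct pg B V} {χ : P →ₗ[ℂ] ℂ} {deg : G →+ ℤ} {u0 : P}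

/-- A highest weight module is an evaluation module, with trivial action of the central
parameters on which the highest weight vanishes. -/
theorem Highest.exists_eval (hH : L.Highest χ deg u0) {β e : G} (hβ : deg β = 1)
    (he : e ≠ 0) (hedeg : deg e = 0) :
    ∃ η : B →ₐ[ℂ] ℂ, (∀ r p b, L.X r p b = η b • L.X r p 1) ∧
      ∀ p, (∀ k, pg k p = 0) → χ p = 0 → ∀ r b, L.X r p b = 0 := by
  have hT := hH.topAct_tested hβ he hedeg
  obtain ⟨η, hη⟩ := hT.exists_algHom
  refine ⟨η, fun r p b => ?_, fun p hp hχ r b => ?_⟩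
  · rw [← sub_eq_zero, ← map_smul, ← map_sub]
    refine hH.eq_zero_of_topAct {c | η c.2 = 0} ?_ ?_ r (by simp)
    · intro m m' p q b b' hb
      simpa using Or.inr hb
    · intro k c hc
      exact X_eq_zero_of_mem_Ann (hη _ hc) _ _
  · refine hH.eq_zero_of_topAct {c | (∀ k, pg k c.1 = 0) ∧ χ c.1 = 0} ?_ ?_ r ⟨hp, hχ⟩
    · rintro m m' p q b b' ⟨h1, h2⟩
      replace h1 : ∀ k, pg k q = 0 := h1
      replace h2 : χ q = 0 := h2
      exact ⟨fun k => by simp [h1], by simp [h1, h2]⟩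
    · rintro k ⟨q, b⟩ ⟨h1, h2⟩
      exact hT.X_eq_zero_of_central hη (fun k => h1 k) (h1 β) h2 k b

/-- Extremal choice of the highest weight. -/
lemma Good.exists_highest {n : ℕ} {pg : (Fin n → ℤ) →+ (P →ₗ[ℂ] ℂ)} {L : LoopAct pg B V}
    [FiniteDimensional ℂ P] [Algebra.FiniteType ℂ B] (hn : 1 ≤ n) (hR : RankCond pg)
    (hu : ∀ deg : (Fin n → ℤ) →+ ℤ, ∃ u0, ∀ m, pg m u0 = deg m) (hL : L.Good χ)
    (hub : ∀ M : ℕ, ∃ x, M < finrank ℂ (L.Wt (χ + pg x))) :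
    ∃ χ deg u0 β, L.Highest χ deg u0 ∧ deg β = 1 := by
  obtain ⟨k, hk⟩ := exists_evKill hn hL hub
  obtain ⟨deg, β, x₀, hβ, hx₀, hle⟩ := hL.exists_degree hR hk
  obtain ⟨u0, hu0⟩ := hu deg
  refine ⟨χ + pg x₀, deg, u0, β, ⟨⟨hL.inj, hL.irr, hL.fin, ?_, hL.notriv, hL.nontriv⟩, hu0,
    fun x hx => ?_, hx₀⟩, hβ⟩
  · rw [← hL.span]
    simp only [add_assoc, ← map_add]
    exact (Equiv.addLeft x₀).iSup_comp (g := fun x => L.Wt (χ + pg x))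
  · rw [add_assoc, ← map_add] at hx
    have := hle _ hx
    rw [map_add] at this
    omega

end LoopAct

namespace ExtWittRep

variable {n : ℕ} {S : Type*} [AddCommGroup S] [Module ℂ S]

variable (n S) in
/-- The pairing between degrees and the parameters of `𝔏_{S,n}`. -/
def degPairing : (Fin n → ℤ) →+ ((Fin n → ℂ) × S →ₗ[ℂ] ℂ) where
  toFun m :=
    { toFun := fun p => pairC p.1 m
      map_add' := fun p q => by simp [pairC, add_mul, Finset.sum_add_distrib]
      map_smul' := fun c p => by simp [pairC, mul_assoc, Finset.mul_sum] }
  map_zero' := by ext <;> simp [pairC]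
  map_add' m m' := by
    refine LinearMap.ext fun p => ?_
    simp [pairC, mul_add, Finset.sum_add_distrib]

@[simp] lemma degPairing_apply (m : Fin n → ℤ) (p : (Fin n → ℂ) × S) :
    degPairing n S m p = pairC p.1 m := rfl

lemma pairC_single (i : Fin n) (m : Fin n → ℤ) : pairC (Pi.single i 1) m = m i := by
  simp [pairC, Pi.single_apply]

lemma degPairing_inj (m : Fin n → ℤ) (hm : m ≠ 0) : ∃ p, degPairing n S m p ≠ 0 := by
  obtain ⟨i, hi⟩ := Function.ne_iff.1 hm
  refine ⟨(Pi.single i 1, 0), ?_⟩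
  rw [degPairing_apply, pairC_single]
  exact_mod_cast hi

lemma rankCond_degPairing (hn : 2 ≤ n) : LoopAct.RankCond (degPairing n S) where
  exists_indep k := by
    let i0 : Fin n := ⟨0, by omega⟩
    let i1 : Fin n := ⟨1, by omega⟩
    have h01 : i0 ≠ i1 := by simp [i0, i1]
    by_cases hk : k i0 = 0
    · refine ⟨Pi.single i0 1, fun a b h => ?_⟩
      simpa [hk] using congrFun h i0
    · refine ⟨Pi.single i1 1, fun a b h => ?_⟩
      have h0 := congrFun h i0
      have h1 := congrFun h i1
      simp [h01, hk] at h0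
      simpa [h0] using h1
  par r s h := by
    by_cases hr : r = 0
    · refine ⟨1, 0, one_ne_zero, ?_⟩
      by_contra hs
      obtain ⟨p, hp⟩ := degPairing_inj (S := S) s (by simpa [hr] using hs)
      exact hp (h p (by simp [hr]))
    · obtain ⟨i, hi⟩ := Function.ne_iff.1 hr
      refine ⟨r i, s i, hi, funext fun j => ?_⟩
      have lin : ∀ m : Fin n → ℤ, pairC
          ((r i : ℂ) • Pi.single j 1 - (r j : ℂ) • Pi.single i 1 : Fin n → ℂ) m =
          r i * m j - r j * m i := by
        intro m
        simp [pairC, sub_mul, Finset.sum_sub_distrib, Pi.single_apply]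
      have h1 := h ((r i : ℂ) • Pi.single j 1 - (r j : ℂ) • Pi.single i 1, 0) (by
        rw [degPairing_apply, lin]; ring)
      rw [degPairing_apply, lin, sub_eq_zero] at h1
      have h2 : r i * s j = r j * s i := by exact_mod_cast h1
      simp [h2, mul_comm]

lemma exists_degPairing_eq (deg : (Fin n → ℤ) →+ ℤ) : ∃ u0, ∀ m, degPairing n S m u0 = deg m := by
  refine ⟨(fun i => deg (Pi.single i 1), 0), fun m => ?_⟩
  have h : m = ∑ i, m i • Pi.single i (1 : ℤ) := by
    ext j; simp [Finset.sum_apply, Pi.single_apply]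
  conv_rhs => rw [h]
  simp only [map_sum, map_zsmul]
  simp [pairC, mul_comm]

variable {B : Type*} [CommRing B] [Algebra ℂ B] {V : Type*} [AddCommGroup V] [Module ℂ V]
  (ρ : ExtWittRep n S B V)

/-- The operators `D u r b + E s r b`. -/
def toLoopAct : LoopAct (degPairing n S) B V where
  X r := LinearMap.mk₂ ℂ (fun p b => ρ.D p.1 r b + ρ.E p.2 r b)
    (fun p q b => by simp only [Prod.fst_add, Prod.snd_add, ρ.D_add_u, ρ.E_add_s]; abel)
    (fun c p b => by simp only [Prod.smul_fst, Prod.smul_snd, ρ.D_smul_u, ρ.E_smul_s, smul_add])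
    (fun p b b' => by simp only [ρ.D_add_b, ρ.E_add_b]; abel)
    (fun c p b => by simp only [ρ.D_smul_b, ρ.E_smul_b, smul_add])
  comm r m p q b b' v := by
    have h1 := LinearMap.congr_fun (ρ.comm_DD p.1 r b q.1 m b') v
    have h2 := LinearMap.congr_fun (ρ.comm_DE p.1 r b q.2 m b') v
    have h3 := LinearMap.congr_fun (ρ.comm_DE q.1 m b' p.2 r b) v
    have h4 := LinearMap.congr_fun (ρ.comm_EE p.2 r b q.2 m b') v
    have h5 : ∀ s s' : S, ∀ k c, ρ.E (s - s') k c = ρ.E s k c - ρ.E s' k c := by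
      intro s s' k c
      rw [eq_sub_iff_add_eq, ← ρ.E_add_s, sub_add_cancel]
    rw [add_comm m r] at h2
    rw [mul_comm b' b] at h3
    simp only [Ring.lie_def, LinearMap.sub_apply, Module.End.mul_apply, LinearMap.smul_apply,
      LinearMap.zero_apply] at h1 h2 h3 h4
    simp only [LinearMap.mk₂_apply, degPairing_apply, Prod.fst_sub, Prod.snd_sub, Prod.smul_fst,
      Prod.smul_snd, LinearMap.add_apply, map_add, h5, ρ.E_smul_s, LinearMap.sub_apply,
      LinearMap.smul_apply, ← h1, ← h2, ← h3]
    rw [sub_eq_zero] at h4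
    rw [h4]
    abel

lemma toLoopAct_X (r : Fin n → ℤ) (p : (Fin n → ℂ) × S) (b : B) :
    ρ.toLoopAct.X r p b = ρ.D p.1 r b + ρ.E p.2 r b := rfl

lemma toLoopAct_X_left (r : Fin n → ℤ) (u : Fin n → ℂ) (b : B) :
    ρ.toLoopAct.X r (u, 0) b = ρ.D u r b := by
  have h : ρ.E 0 r b = 0 := by simpa using ρ.E_smul_s 0 0 r b
  simp [toLoopAct_X, h]

lemma toLoopAct_X_right (r : Fin n → ℤ) (s : S) (b : B) :
    ρ.toLoopAct.X r (0, s) b = ρ.E s r b := by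
  have h : ρ.D 0 r b = 0 := by simpa using ρ.D_smul_u 0 0 r b
  simp [toLoopAct_X, h]

lemma inv_toLoopAct {U : Submodule ℂ V} (hU : ρ.Invariant U) : ρ.toLoopAct.Inv U := by
  intro r p b v hv
  exact add_mem (hU.1 _ _ _ _ hv) (hU.2 _ _ _ _ hv)

lemma invariant_of_inv {U : Submodule ℂ V} (hU : ρ.toLoopAct.Inv U) : ρ.Invariant U :=
  ⟨fun u r b x hx => ρ.toLoopAct_X_left r u b ▸ hU r (u, 0) b x hx,
    fun s m b x hx => ρ.toLoopAct_X_right m s b ▸ hU m (0, s) b x hx⟩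

/-- The character of the parameter space given by a weight. -/
def weightChar (lam : Fin n → ℂ) (c : S →ₗ[ℂ] ℂ) : (Fin n → ℂ) × S →ₗ[ℂ] ℂ :=
  ((Fintype.linearCombination ℂ lam : (Fin n → ℂ) →ₗ[ℂ] ℂ)).coprod c

lemma weightSpace_eq (lam : Fin n → ℂ) (c : S →ₗ[ℂ] ℂ) :
    ρ.weightSpace lam c = ρ.toLoopAct.Wt (weightChar lam c) := by
  have h1 : ∀ u, pairCC u lam = weightChar lam c (u, 0) := by
    intro u; simp [pairCC, weightChar, Fintype.linearCombination_apply]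
  have h2 : ∀ s, c s = weightChar lam c (0, s) := by
    intro s; simp [weightChar]
  ext v
  constructor
  · rintro ⟨hD, hE⟩ ⟨u, s⟩
    have e : ((u, s) : (Fin n → ℂ) × S) = (u, 0) + (0, s) := by simp
    rw [toLoopAct_X, LinearMap.add_apply, hD, hE, h1 u, h2 s, ← add_smul, ← map_add, ← e]
  · intro h
    refine ⟨fun u => ?_, fun s => ?_⟩
    · rw [← toLoopAct_X_left, h, h1]
    · rw [← toLoopAct_X_right, h, ← h2]

lemma exists_eq_weightChar (ψ : (Fin n → ℂ) × S →ₗ[ℂ] ℂ) : ∃ lam c, ψ = weightChar lam c := by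
  refine ⟨fun i => ψ (Pi.single i 1, 0), ψ.comp (LinearMap.inr ℂ _ _), ?_⟩
  ext <;> simp [weightChar, Fintype.linearCombination_apply, Pi.single_apply]

variable {ρ}

lemma exists_good (hhc : ρ.HarishChandra) (hirr : ρ.IsIrreducible)
    (hnub : ¬ ρ.UniformlyBounded) :
    ∃ χ, ρ.toLoopAct.Good χ ∧
      ∀ M : ℕ, ∃ x, M < finrank ℂ (ρ.toLoopAct.Wt (χ + degPairing n S x)) := by
  have hnt : Nontrivial V := ⟨⟨hirr.1.choose, 0, hirr.1.choose_spec⟩⟩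
  have hfin : ∀ ψ, FiniteDimensional ℂ (ρ.toLoopAct.Wt ψ) := by
    intro ψ
    obtain ⟨lam, c, rfl⟩ := exists_eq_weightChar ψ
    rw [← weightSpace_eq]
    exact hhc.2 lam c
  have hirr' : ∀ U, ρ.toLoopAct.Inv U → U = ⊥ ∨ U = ⊤ :=
    fun U hU => hirr.2 U (ρ.invariant_of_inv hU)
  obtain ⟨χ, hχ⟩ : ∃ χ, ρ.toLoopAct.Wt χ ≠ ⊥ := by
    by_contra! h
    have h1 := hhc.1
    simp only [IsWeightModule, weightSpace_eq, h, iSup_bot] at h1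
    exact bot_ne_top h1
  have hspan : ⨆ x, ρ.toLoopAct.Wt (χ + degPairing n S x) = ⊤ := by
    refine (hirr' _ fun r p b v hv => ?_).resolve_left fun h => hχ ?_
    · have : (⨆ x, ρ.toLoopAct.Wt (χ + degPairing n S x)) ≤
          (⨆ x, ρ.toLoopAct.Wt (χ + degPairing n S x)).comap (ρ.toLoopAct.X r p b) :=
        iSup_le fun x v hv => Submodule.mem_iSup_of_mem (x + r) (LoopAct.X_mem_Wt' hv p b rfl)
      exact this hv
    · have := iSup_eq_bot.1 h 0
      rwa [map_zero, add_zero] at this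
  refine ⟨χ, ⟨degPairing_inj, hirr', hfin, hspan, ?_, hnt⟩, ?_⟩
  · intro v hv
    let U : Submodule ℂ V := ⨅ r, ⨅ p, ⨅ b, LinearMap.ker (ρ.toLoopAct.X r p b)
    have hU : ∀ v, v ∈ U ↔ ∀ r p b, ρ.toLoopAct.X r p b v = 0 := by
      intro v; simp only [U, Submodule.mem_iInf, LinearMap.mem_ker]
    rcases hirr' U (fun r p b v hv => by
      rw [hU] at hv ⊢; intro r' p' b'; rw [hv, map_zero]) with h | h
    · have := (hU v).2 hv
      rwa [h, Submodule.mem_bot] at this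
    · exfalso
      have h0 : ρ.toLoopAct.Wt 0 = ⊤ := by
        rw [eq_top_iff]
        intro v _ p
        rw [(hU v).1 (h ▸ Submodule.mem_top)]
        simp
      have hf := hfin 0
      rw [h0] at hf
      have : FiniteDimensional ℂ V := Module.Finite.equiv Submodule.topEquiv
      refine hnub ⟨finrank ℂ V, fun lam c => ?_⟩
      rw [finrank_eq_rank]
      exact Submodule.rank_le _
  · by_contra! h
    obtain ⟨M, hM⟩ := h
    refine hnub ⟨M, fun lam c => ?_⟩
    have := hfin (weightChar lam c)
    rw [weightSpace_eq, ← finrank_eq_rank, Nat.cast_le]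
    by_cases hx : ∃ x, weightChar lam c = χ + degPairing n S x
    · obtain ⟨x, hx⟩ := hx
      rw [hx]
      exact hM x
    · have h1 := ρ.toLoopAct.iSupIndep_Wt (weightChar lam c)
      have h2 : ⨆ ψ, ⨆ (_ : ψ ≠ weightChar lam c), ρ.toLoopAct.Wt ψ = ⊤ := by
        rw [eq_top_iff, ← hspan]
        exact iSup_le fun x => le_iSup₂_of_le (χ + degPairing n S x)
          (fun he => hx ⟨x, he.symm⟩) le_rfl
      rw [h2, disjoint_top] at h1
      rw [h1, finrank_bot]
      exact Nat.zero_le _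

end ExtWittRep

end LoopWitt

/-- For `n ≥ 2`, an irreducible Harish-Chandra `𝔏_{S,n}(B)`-module
with non-uniformly bounded weight spaces reduces to an irreducible module for `𝔏(B)` or
`Wₙ ⊗ B` (a subspace of `S` of codimension at most one acts trivially); as such it is a
single point evaluation module, and (up to a change of variables) it is an irreducible
highest weight module `L(K, β, Z)` for some triangular decomposition `ℤⁿ = K ⊕ ℤβ`. -/
theorem stmt14 {n : ℕ} (hn : 2 ≤ n) {S B V : Type*}
    [AddCommGroup S] [Module ℂ S] [FiniteDimensional ℂ S]
    [CommRing B] [Algebra ℂ B] [Algebra.FiniteType ℂ B]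
    [AddCommGroup V] [Module ℂ V]
    (ρ : ExtWittRep n S B V)
    (hhc : ρ.HarishChandra) (hirr : ρ.IsIrreducible) (hnub : ¬ ρ.UniformlyBounded) :
    -- reduction to `𝔏(B)` or `Wₙ ⊗ B`:
    (∃ S0 : Submodule ℂ S,
      (∀ s ∈ S0, ∀ (m : Fin n → ℤ) (b : B), ρ.E s m b = 0) ∧
      Module.finrank ℂ (S ⧸ S0) ≤ 1 ∧
      ((S0 = ⊤ →
        (∃ x : V, x ≠ 0) ∧
        ∀ U : Submodule ℂ V,
          (∀ u r b, ∀ x ∈ U, ρ.D u r b x ∈ U) → U = ⊥ ∨ U = ⊤) ∧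
       (∀ s₀ : S, s₀ ∉ S0 →
        (∃ x : V, x ≠ 0) ∧
        ∀ U : Submodule ℂ V,
          ((∀ u r b, ∀ x ∈ U, ρ.D u r b x ∈ U) ∧
            (∀ (m : Fin n → ℤ) (b : B), ∀ x ∈ U, ρ.E s₀ m b x ∈ U)) →
          U = ⊥ ∨ U = ⊤))) ∧
    -- single point evaluation:
    ρ.IsSinglePointEval ∧
    -- `V ≅ L(K, β, Z)`: a highest weight module with irreducible highest weight space
    (∃ (K : AddSubgroup (Fin n → ℤ)) (β : Fin n → ℤ),
      IsDirectSumDecomp K β ∧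
      ∃ z : V, ρ.IsHWVector K β z ∧
        ρ.hwSpace K z ≠ ⊥ ∧
        ∀ U : Submodule ℂ V, U ≤ ρ.hwSpace K z → ρ.InvariantK K U →
          U = ⊥ ∨ U = ρ.hwSpace K z) := by
  obtain ⟨χ₀, hgood, hub⟩ := ExtWittRep.exists_good hhc hirr hnub
  have hR := ExtWittRep.rankCond_degPairing (S := S) hn
  obtain ⟨χ, deg, u0, β, hH, hβ⟩ :=
    hgood.exists_highest (by omega) hR ExtWittRep.exists_degPairing_eq hub
  have hsmul : ∀ d : ℤ, deg (d • β) = d := fun d => by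
    rw [map_zsmul, hβ, smul_eq_mul, mul_one]
  obtain ⟨e, he0, hedeg⟩ : ∃ e, e ≠ 0 ∧ deg e = 0 := by
    obtain ⟨e, he⟩ := hR.exists_indep β
    refine ⟨e - deg e • β, fun h => one_ne_zero (he 1 (deg e) ?_), by rw [map_sub, hsmul, sub_self]⟩
    rw [one_smul, ← sub_eq_zero, h]
  obtain ⟨η, hη, hcentral⟩ := hH.exists_eval hβ he0 hedeg
  have hposDeg : ∀ r, posDeg deg.ker β r → 0 < deg r := by
    rintro _ ⟨a, ha, d, hd, rfl⟩
    rw [map_add, AddMonoidHom.mem_ker.1 ha, hsmul, zero_add]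
    exact hd
  have hinvK : ∀ U : Submodule ℂ V, ρ.InvariantK deg.ker U →
      ∀ v ∈ U, ∀ r p b, deg r = 0 → ρ.toLoopAct.X r p b v ∈ U :=
    fun U hU v hv r p b hr => add_mem (hU.1 _ r hr b v hv) (hU.2 _ r hr b v hv)
  have hLevK : ρ.InvariantK deg.ker (ρ.toLoopAct.Lev χ u0 0) :=
    ⟨fun u r hr b x hx => ρ.toLoopAct_X_left r u b ▸
        hH.X_mem_Lev hx (u, 0) b (by simp [AddMonoidHom.mem_ker.1 hr]),
      fun s r hr b x hx => ρ.toLoopAct_X_right r s b ▸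
        hH.X_mem_Lev hx (0, s) b (by simp [AddMonoidHom.mem_ker.1 hr])⟩
  obtain ⟨z, hz, hz0⟩ := Submodule.exists_mem_ne_zero_of_ne_bot hH.wt_ne
  have hzLev : z ∈ ρ.toLoopAct.Lev χ u0 0 := by
    have := hH.Wt_le_Lev 0
    rw [map_zero, add_zero, map_zero] at this
    exact this hz
  refine ⟨?_, ⟨η, fun u r b => ?_, fun s m b => ?_⟩, deg.ker, β, ⟨fun m => ?_, fun d hd => ?_⟩, z,
    ⟨hz0, ?_, fun u r b hr => ?_, fun s r b hr => ?_, fun U hU hzU => ?_⟩, ?_⟩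
  · let f : S →ₗ[ℂ] ℂ := χ.comp (LinearMap.inr ℂ (Fin n → ℂ) S)
    have hE : ∀ s, f s = 0 → ∀ m b, ρ.E s m b = 0 := by
      intro s hs m b
      rw [← ρ.toLoopAct_X_right]
      exact hcentral (0, s) (fun k => by simp [pairC]) hs m b
    refine ⟨LinearMap.ker f, fun s hs => hE s hs, ?_, fun htop => ⟨hirr.1, fun U hU => ?_⟩,
      fun s₀ hs₀ => ⟨hirr.1, fun U hU => ?_⟩⟩
    · rw [f.quotKerEquivRange.finrank_eq]
      exact (Submodule.finrank_le _).trans (finrank_self ℂ).le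
    · refine hirr.2 U ⟨hU, fun s m b x hx => ?_⟩
      have hs : s ∈ LinearMap.ker f := htop ▸ Submodule.mem_top
      rw [hE s hs]
      exact U.zero_mem
    · refine hirr.2 U ⟨hU.1, fun s m b x hx => ?_⟩
      have h0 : f s₀ ≠ 0 := hs₀
      have h1 : ρ.E (s - (f s / f s₀) • s₀) m b = 0 := hE _ (by simp [h0]) m b
      have h2 := ρ.E_add_s (s - (f s / f s₀) • s₀) ((f s / f s₀) • s₀) m b
      rw [sub_add_cancel, h1, zero_add, ρ.E_smul_s] at h2
      rw [h2]
      exact U.smul_mem _ (hU.2 m b x hx)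
  · rw [← ρ.toLoopAct_X_left, hη, ρ.toLoopAct_X_left]
  · rw [← ρ.toLoopAct_X_right, hη, ρ.toLoopAct_X_right]
  · exact ⟨m - deg m • β, by rw [AddMonoidHom.mem_ker, map_sub, hsmul, sub_self], deg m,
      (sub_add_cancel _ _).symm⟩
  · rwa [AddMonoidHom.mem_ker, hsmul] at hd
  · obtain ⟨lam, c, hχ⟩ := ExtWittRep.exists_eq_weightChar χ
    exact ⟨lam, c, by rwa [ρ.weightSpace_eq, ← hχ]⟩
  · rw [← ρ.toLoopAct_X_left]
    exact hH.X_eq_zero hzLev _ _ (by simpa using hposDeg r hr)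
  · rw [← ρ.toLoopAct_X_right]
    exact hH.X_eq_zero hzLev _ _ (by simpa using hposDeg r hr)
  · exact hH.eq_top_of_mem (ρ.inv_toLoopAct hU) hzU hz0
  · have hle : ρ.hwSpace deg.ker z ≤ ρ.toLoopAct.Lev χ u0 0 := sInf_le ⟨hzLev, hLevK⟩
    have hzmem : z ∈ ρ.hwSpace deg.ker z := Submodule.mem_sInf.2 fun U hU => hU.1
    refine ⟨fun h => hz0 (by rwa [h, Submodule.mem_bot] at hzmem), fun U hU hUK => ?_⟩
    by_cases h0 : U = ⊥
    · exact Or.inl h0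
    · refine Or.inr (le_antisymm hU ?_)
      rw [hH.eq_Lev_of_invariant (hU.trans hle) (hinvK U hUK) h0]
      exact hle
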